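/- arXiv:1905.10973 — 8 statements merged into one kernel-verified Lean document; each statement's English description precedes it below -/
import Mathlib

section
/- Fix an integer n ≥ 2 and a sequence a = (a_1,…,a_n) of nonnegative integers. Call a Tesler matrix associated to a two-diagonal if m_{ij} = 0 whenever j > i+1. Then the map sending a two-diagonal Tesler matrix M to the sequence μ = (μ_1,…,μ_{n−1}) defined by μ_{i−1} = m_{ii} + m_{i+1,i+1} + ⋯ + m_{nn} for 2 ≤ i ≤ n is a bijection from the set of two-diagonal Tesler matrices associated to a onto the set of partitions μ contained in λ(a). -/
open Finset

/-- A Tesler matrix associated to the sequence `a`. -/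
def IsTesler (n : ℕ) (a : Fin n → ℕ) (M : Fin n → Fin n → ℕ) : Prop :=
  (∀ i j : Fin n, j < i → M i j = 0) ∧
    ∀ i : Fin n,
      M i i + ∑ j ∈ univ.filter (fun j => j < i), M j i
        = a i + ∑ j ∈ univ.filter (fun j => i < j), M i j

/-- A Tesler matrix is two-diagonal if `m i j = 0` whenever `j > i + 1`. -/
def TwoDiag (n : ℕ) (M : Fin n → Fin n → ℕ) : Prop :=
  ∀ i j : Fin n, (i : ℕ) + 1 < (j : ℕ) → M i j = 0

/-- The partition `λ(a) = (a_2 + ⋯ + a_n, a_3 + ⋯ + a_n, …, a_n)`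
(0-indexed: `lam n a k = a_{k+2} + ⋯ + a_n`). -/
def lam (n : ℕ) (a : Fin n → ℕ) (k : Fin (n - 1)) : ℕ :=
  ∑ i ∈ univ.filter (fun i : Fin n => (k : ℕ) < (i : ℕ)), a i

/-- The map sending `M` to the sequence of partial diagonal sums
`μ_{i-1} = m_{ii} + m_{i+1,i+1} + ⋯ + m_{nn}` for `2 ≤ i ≤ n`. -/
def diagSums (n : ℕ) (M : Fin n → Fin n → ℕ) (k : Fin (n - 1)) : ℕ :=
  ∑ i ∈ univ.filter (fun i : Fin n => (k : ℕ) < (i : ℕ)), M i i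

/-- Tail sums. -/
def tailSum (n : ℕ) (f : Fin n → ℕ) (k : ℕ) : ℕ :=
  ∑ i ∈ univ.filter (fun i : Fin n => k < (i : ℕ)), f i

lemma tailSum_top (n : ℕ) (f : Fin n → ℕ) (k : ℕ) (h : n ≤ k + 1) : tailSum n f k = 0 := by
  unfold tailSum
  apply Finset.sum_eq_zero
  intro i hi
  have := i.2
  simp only [mem_filter, mem_univ, true_and] at hi
  omega

lemma tailSum_step (n : ℕ) (f : Fin n → ℕ) (k : ℕ) (h : k + 1 < n) :
    tailSum n f k = f ⟨k + 1, h⟩ + tailSum n f (k + 1) := by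
  unfold tailSum
  have : univ.filter (fun i : Fin n => k < (i : ℕ))
      = insert ⟨k + 1, h⟩ (univ.filter (fun i : Fin n => k + 1 < (i : ℕ))) := by
    ext i
    simp only [mem_filter, mem_univ, true_and, mem_insert, Fin.ext_iff]
    omega
  rw [this, Finset.sum_insert (by simp)]

/-- Superdiagonal entries. -/
def superDiag (n : ℕ) (M : Fin n → Fin n → ℕ) (k : ℕ) : ℕ :=
  if h : k + 1 < n then M ⟨k, by omega⟩ ⟨k + 1, h⟩ else 0

lemma row_sum (n : ℕ) (M : Fin n → Fin n → ℕ) (hM : TwoDiag n M) (i : Fin n) :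
    ∑ j ∈ univ.filter (fun j => i < j), M i j = superDiag n M i := by
  unfold superDiag
  split_ifs with h
  · rw [Finset.sum_eq_single ⟨(i : ℕ) + 1, h⟩]
    · intro j hj hne
      simp only [mem_filter, mem_univ, true_and, Fin.lt_def] at hj
      simp only [ne_eq, Fin.ext_iff] at hne
      exact hM i j (by omega)
    · intro hh
      exact absurd (by simp only [mem_filter, mem_univ, true_and, Fin.lt_def]; omega) hh
  · apply Finset.sum_eq_zero
    intro j hj
    simp only [mem_filter, mem_univ, true_and, Fin.lt_def] at hj
    have := j.2
    omega

lemma col_sum (n : ℕ) (M : Fin n → Fin n → ℕ) (hM : TwoDiag n M) (k : ℕ) (h : k + 1 < n) :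
    ∑ j ∈ univ.filter (fun j => j < (⟨k + 1, h⟩ : Fin n)), M j ⟨k + 1, h⟩
      = superDiag n M k := by
  unfold superDiag
  rw [dif_pos h, Finset.sum_eq_single ⟨k, by omega⟩]
  · intro j hj hne
    simp only [mem_filter, mem_univ, true_and, Fin.lt_def] at hj
    simp only [ne_eq, Fin.ext_iff] at hne
    exact hM j _ (by simp only []; omega)
  · intro hh
    simp [Fin.lt_def] at hh

lemma col_sum_zero (n : ℕ) (M : Fin n → Fin n → ℕ) (h : 0 < n) :
    ∑ j ∈ univ.filter (fun j => j < (⟨0, h⟩ : Fin n)), M j ⟨0, h⟩ = 0 := by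
  apply Finset.sum_eq_zero
  intro j hj
  simp [Fin.lt_def] at hj

lemma tesler_step (n : ℕ) (a : Fin n → ℕ) (M : Fin n → Fin n → ℕ) (hT : IsTesler n a M)
    (hM : TwoDiag n M) (k : ℕ) (h : k + 1 < n) :
    M ⟨k + 1, h⟩ ⟨k + 1, h⟩ + superDiag n M k = a ⟨k + 1, h⟩ + superDiag n M (k + 1) := by
  have := hT.2 ⟨k + 1, h⟩
  rwa [col_sum n M hM, row_sum n M hM] at this

lemma tesler_zero (n : ℕ) (a : Fin n → ℕ) (M : Fin n → Fin n → ℕ) (hT : IsTesler n a M)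
    (hM : TwoDiag n M) (h : 0 < n) :
    M ⟨0, h⟩ ⟨0, h⟩ = a ⟨0, h⟩ + superDiag n M 0 := by
  have := hT.2 ⟨0, h⟩
  rwa [col_sum_zero n M, row_sum n M hM, add_zero] at this

lemma tesler_key (n : ℕ) (a : Fin n → ℕ) (M : Fin n → Fin n → ℕ) (hT : IsTesler n a M)
    (hM : TwoDiag n M) (d : ℕ) : ∀ k : ℕ, n ≤ k + 1 + d →
    tailSum n (fun i => M i i) k + superDiag n M k = tailSum n a k := by
  induction d with
  | zero =>
    intro k hk
    rw [tailSum_top _ _ _ (by omega), tailSum_top _ _ _ (by omega), superDiag,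
      dif_neg (by omega)]
  | succ d ih =>
    intro k hk
    by_cases h : k + 1 < n
    · have h1 := ih (k + 1) (by omega)
      have h2 := tesler_step n a M hT hM k h
      rw [tailSum_step _ _ _ h, tailSum_step _ a _ h]
      omega
    · exact ih k (by omega)

lemma tailSum_eq (n : ℕ) (f : Fin n → ℕ) (m : ℕ → ℕ) (h0 : ∀ k, n ≤ k + 1 → m k = 0)
    (hs : ∀ k (h : k + 1 < n), m k = f ⟨k + 1, h⟩ + m (k + 1)) (d : ℕ) :
    ∀ k : ℕ, n ≤ k + 1 + d → tailSum n f k = m k := by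
  induction d with
  | zero =>
    intro k hk
    rw [tailSum_top _ _ _ (by omega), h0 k (by omega)]
  | succ d ih =>
    intro k hk
    by_cases h : k + 1 < n
    · rw [tailSum_step _ _ _ h, ih (k + 1) (by omega), hs k h]
    · exact ih k (by omega)

/-- The inverse map. -/
def invMat (n : ℕ) (a : Fin n → ℕ) (m : ℕ → ℕ) (i j : Fin n) : ℕ :=
  if (j : ℕ) = i then
    (if (i : ℕ) = 0 then a i + (tailSum n a 0 - m 0) else m (i - 1) - m i)
  else if (j : ℕ) = i + 1 then tailSum n a i - m i else 0

theorem twoDiagonal_tesler_bijection (n : ℕ) (hn : 2 ≤ n) (a : Fin n → ℕ) :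
    Set.BijOn (fun M => diagSums n M)
      {M : Fin n → Fin n → ℕ | IsTesler n a M ∧ TwoDiag n M}
      {μ : Fin (n - 1) → ℕ |
        (∀ k l : Fin (n - 1), k ≤ l → μ l ≤ μ k) ∧ ∀ k, μ k ≤ lam n a k} := by
  refine ⟨?_, ?_, ?_⟩
  · rintro M ⟨hT, hM⟩
    refine ⟨?_, ?_⟩
    · intro k l hkl
      apply Finset.sum_le_sum_of_subset
      intro i hi
      simp only [mem_filter, mem_univ, true_and, Fin.le_def] at hi hkl ⊢
      omega
    · intro k
      have := tesler_key n a M hT hM n k (by omega)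
      change tailSum n (fun i => M i i) k ≤ tailSum n a k
      omega
  · rintro M ⟨hT, hM⟩ N ⟨hT', hN⟩ hMN
    have hd : ∀ k : ℕ, tailSum n (fun i => M i i) k = tailSum n (fun i => N i i) k := by
      intro k
      by_cases h : k < n - 1
      · exact congrFun hMN ⟨k, h⟩
      · rw [tailSum_top _ _ _ (by omega), tailSum_top _ _ _ (by omega)]
    have hx : ∀ k : ℕ, superDiag n M k = superDiag n N k := by
      intro k
      have h1 := tesler_key n a M hT hM n k (by omega)
      have h2 := tesler_key n a N hT' hN n k (by omega)
      have := hd k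
      omega
    funext ⟨i, hi⟩ ⟨j, hj⟩
    rcases lt_trichotomy j i with h | h | h
    · rw [hT.1 _ _ h, hT'.1 _ _ h]
    · subst h
      cases j with
      | zero => rw [tesler_zero n a M hT hM, tesler_zero n a N hT' hN, hx]
      | succ k =>
        have h1 := tesler_step n a M hT hM k hi
        have h2 := tesler_step n a N hT' hN k hi
        have h3 := hx k
        have h4 := hx (k + 1)
        omega
    · by_cases h' : j = i + 1
      · subst h'
        have := hx i
        simpa only [superDiag, dif_pos hj] using this
      · rw [hM _ _ (by simp only []; omega), hN _ _ (by simp only []; omega)]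
  · rintro μ ⟨hμ, hle⟩
    obtain ⟨m, hm⟩ : ∃ m : ℕ → ℕ, m = fun k => if h : k < n - 1 then μ ⟨k, h⟩ else 0 :=
      ⟨_, rfl⟩
    have hm0 : ∀ k, n ≤ k + 1 → m k = 0 := by
      intro k hk
      rw [hm]
      exact dif_neg (by omega)
    have hm1 : ∀ k (h : k < n - 1), m k = μ ⟨k, h⟩ := by
      intro k hk
      rw [hm]
      exact dif_pos hk
    have hanti : ∀ k, m (k + 1) ≤ m k := by
      intro k
      by_cases h : k + 1 < n - 1
      · rw [hm1 _ h, hm1 k (by omega)]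
        exact hμ _ _ (by simp [Fin.le_def])
      · rw [hm0 (k + 1) (by omega)]
        exact Nat.zero_le _
    have hmle : ∀ k, m k ≤ tailSum n a k := by
      intro k
      by_cases h : k < n - 1
      · rw [hm1 _ h]
        exact hle ⟨k, h⟩
      · rw [hm0 k (by omega)]
        exact Nat.zero_le _
    have hTD : TwoDiag n (invMat n a m) := by
      intro i j hij
      unfold invMat
      rw [if_neg (by omega), if_neg (by omega)]
    have hsd : ∀ k, superDiag n (invMat n a m) k = tailSum n a k - m k := by
      intro k
      unfold superDiag
      split_ifs with h
      · simp [invMat]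
      · rw [tailSum_top _ _ _ (by omega), Nat.zero_sub]
    have hdg : ∀ k (h : k + 1 < n), invMat n a m ⟨k + 1, h⟩ ⟨k + 1, h⟩ = m k - m (k + 1) := by
      intro k h
      simp [invMat]
    refine ⟨invMat n a m, ⟨⟨?_, ?_⟩, hTD⟩, ?_⟩
    · intro i j hij
      rw [Fin.lt_def] at hij
      unfold invMat
      rw [if_neg (by omega), if_neg (by omega)]
    · rintro ⟨i, hi⟩
      rw [row_sum n _ hTD]
      cases i with
      | zero =>
        rw [col_sum_zero, hsd]
        simp [invMat]
      | succ k =>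
        rw [col_sum n _ hTD, hsd, hsd, hdg]
        have h1 := tailSum_step n a k hi
        have h2 := hmle k
        have h3 := hmle (k + 1)
        have h4 := hanti k
        simp only []
        omega
    · funext k
      have := tailSum_eq n (fun i => invMat n a m i i) m hm0 (by
        intro k h
        have h1 := hdg k h
        have h4 := hanti k
        omega) n k (by omega)
      rw [hm1 k k.2] at this
      exact this
end

section
/- Let h ∈ ℤ[q,t] be a polynomial with nonnegative coefficients such that every monomial q^i t^j occurring in h satisfies i ≥ j. Then the rational function h(q,t)/(1 − t/q) + h(t,q)/(1 − q/t) = (q·h(q,t) − t·h(t,q))/(q − t) is a polynomial in q and t with nonnegative integer coefficients. -/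
open MvPolynomial

noncomputable section

/-- The fraction field `ℚ(q,t)` realized as the fraction field of `ℤ[q,t]`. -/
abbrev K : Type := FractionRing (MvPolynomial (Fin 2) ℤ)

/-- The canonical embedding `ℤ[q,t] → ℚ(q,t)`. -/
def φ : MvPolynomial (Fin 2) ℤ →+* K := algebraMap _ _

theorem nds_mono (m : Fin 2 →₀ ℕ) (c : ℤ) :
    monomial m c = C c * (X 0 ^ m 0 * X 1 ^ m 1 : MvPolynomial (Fin 2) ℤ) := by
  rw [monomial_eq, Finsupp.prod_fintype _ _ (by simp), Fin.prod_univ_two]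

theorem nds_mul_sum (h : MvPolynomial (Fin 2) ℤ)
    (hpos : ∀ m : Fin 2 →₀ ℕ, 0 ≤ h.coeff m)
    (hdom : ∀ m ∈ h.support, m 1 ≤ m 0) :
    ∃ g : MvPolynomial (Fin 2) ℤ, (∀ m : Fin 2 →₀ ℕ, 0 ≤ g.coeff m) ∧
      g * (X 0 - X 1) = X 0 * h - X 1 * rename (Equiv.swap (0 : Fin 2) 1) h := by
  let g' : MvPolynomial (Fin 2) ℕ := ∑ m ∈ h.support, C (h.coeff m).toNat * ((X 0 * X 1) ^ m 1 *
    ∑ k ∈ Finset.range (m 0 - m 1 + 1), X 0 ^ k * X 1 ^ (m 0 - m 1 + 1 - 1 - k))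
  refine ⟨map (Nat.castRingHom ℤ) g', fun m => by rw [coeff_map]; simp, ?_⟩
  have hh : h = ∑ m ∈ h.support, C (h.coeff m) * (X 0 ^ m 0 * X 1 ^ m 1) := by
    conv_lhs => rw [h.as_sum]
    exact Finset.sum_congr rfl fun m _ => nds_mono m _
  have hr : rename (Equiv.swap (0 : Fin 2) 1) h
      = ∑ m ∈ h.support, C (h.coeff m) * (X 1 ^ m 0 * X 0 ^ m 1) := by
    conv_lhs => rw [hh]
    simp only [map_sum, map_mul, map_pow, rename_C, rename_X, Equiv.swap_apply_left,
      Equiv.swap_apply_right]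
  rw [hr]
  have hX : X 0 * h = X 0 * ∑ m ∈ h.support, C (h.coeff m) * (X 0 ^ m 0 * X 1 ^ m 1) :=
    congrArg (X 0 * ·) hh
  rw [hX]
  simp only [g', map_sum, map_mul, map_pow, map_C, map_X]
  rw [Finset.mul_sum, Finset.mul_sum, Finset.sum_mul, ← Finset.sum_sub_distrib]
  refine Finset.sum_congr rfl fun m hm' => ?_
  obtain ⟨d, hd⟩ := Nat.exists_eq_add_of_le (hdom m hm')
  have hc : (Nat.castRingHom ℤ) (h.coeff m).toNat = h.coeff m := by
    simpa using hpos m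
  rw [hc, mul_assoc, mul_assoc, Commute.geom_sum₂_mul (Commute.all _ _), hd]
  simp only [Nat.add_sub_cancel_left]
  ring

theorem nonneg_dominant_poly_symmetrization (h : MvPolynomial (Fin 2) ℤ)
    (hpos : ∀ m : Fin 2 →₀ ℕ, 0 ≤ h.coeff m)
    (hdom : ∀ m ∈ h.support, m 1 ≤ m 0) :
    (φ h / (1 - φ (X 1) / φ (X 0))
        + φ (rename (Equiv.swap (0 : Fin 2) 1) h) / (1 - φ (X 0) / φ (X 1))
      = (φ (X 0) * φ h - φ (X 1) * φ (rename (Equiv.swap (0 : Fin 2) 1) h))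
          / (φ (X 0) - φ (X 1))) ∧
    ∃ g : MvPolynomial (Fin 2) ℤ, (∀ m : Fin 2 →₀ ℕ, 0 ≤ g.coeff m) ∧
      φ g = (φ (X 0) * φ h - φ (X 1) * φ (rename (Equiv.swap (0 : Fin 2) 1) h))
              / (φ (X 0) - φ (X 1)) := by
  have inj : Function.Injective φ := IsFractionRing.injective (MvPolynomial (Fin 2) ℤ) K
  have h0 : φ (X 0) ≠ 0 := by
    rw [Ne, map_eq_zero_iff φ inj]; exact X_ne_zero _
  have h1 : φ (X 1) ≠ 0 := by
    rw [Ne, map_eq_zero_iff φ inj]; exact X_ne_zero _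
  have h01 : φ (X 0) - φ (X 1) ≠ 0 := by
    rw [sub_ne_zero]
    intro h
    have := X_injective (inj h)
    simp at this
  have h10 : φ (X 1) - φ (X 0) ≠ 0 := by
    rw [← neg_sub]; exact neg_ne_zero.mpr h01
  constructor
  · rw [one_sub_div h0, one_sub_div h1, ← neg_sub (φ (X 0)) (φ (X 1))]
    field_simp
    ring
  · obtain ⟨g, hg, he⟩ := nds_mul_sum h hpos hdom
    refine ⟨g, hg, ?_⟩
    rw [eq_div_iff h01, ← map_sub, ← map_mul, he, map_sub, map_mul, map_mul]
end
end

section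
/- Let a, b, c be nonnegative integers with a+1 ≥ b, a+1 ≥ c and b+1 ≥ c. Then the specialization of F₃(a,b,c) at t = q^{−1} is a Laurent polynomial ∑_k c_k q^k in q with nonnegative integer coefficients which is symmetric about degree 0 (c_k = c_{−k} for all k) and whose coefficients are unimodal in even and in odd degrees: c_k ≥ c_{k+2} for all k ≥ 0. -/
open Finset

noncomputable section

/-- `H₃(a,b,c;x,y)`, the head-like standard-tableau expansion for `n = 4`, as a field
expression in the two variables `x`, `y` (interchanging them interchanges `q` and `t`). -/
def H₃ {F : Type*} [Field F] (a b c : ℤ) (x y : F) : F :=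
  x ^ (a + 2 * b + 3 * c) / ((1 - y / x ^ 2) * (1 - y / x ^ 3))
    + x ^ (a + 2 * b) * y ^ c / ((1 - y / x ^ 2) * (1 - x ^ 3 / y))
    + x ^ (a + 2 * c) * y ^ b * (1 - y) / ((1 - y ^ 2 / x ^ 2) * (1 - x ^ 2 / y) * (1 - y / x))
    + x ^ a * y ^ (b + 2 * c) / ((1 - x ^ 2 / y ^ 2) * (1 - x / y))
    + x ^ (a + c) * y ^ (b + c) * (1 - x) / ((1 - x ^ 2 / y) * (1 - x / y) * (1 - y / x))

/-- `F₃(a,b,c) = H₃(a,b,c;x,y)/(1 − y/x) + H₃(a,b,c;y,x)/(1 − x/y)`. -/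
def F₃ {F : Type*} [Field F] (a b c : ℤ) (x y : F) : F :=
  H₃ a b c x y / (1 - y / x) + H₃ a b c y x / (1 - x / y)

/-- The field `ℚ(u)` of rational functions in one variable over `ℚ`. -/
abbrev K1 : Type := FractionRing (Polynomial ℚ)

/-- The variable `u` of `ℚ(u)`; the specialization `t = q⁻¹` of `ℚ(q,t)` sends
`q ↦ u` and `t ↦ u⁻¹`. -/
def u : K1 := algebraMap (Polynomial ℚ) K1 Polynomial.X

def p34 (n : ℤ) : ℤ := if 0 ≤ n then n / 3 + (-n) / 4 + 1 else 0
def p24 (n : ℤ) : ℤ := if 0 ≤ n then (if n % 2 = 0 then n / 4 + 1 else 0) else 0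
def pr (n : ℤ) : ℤ := if 0 ≤ n then (if n % 2 = 0 then n / 6 + 1 else - (n / 4 + (-(n / 2)) / 3 + 1)) else 0
def ps (n : ℤ) : ℤ := if 0 ≤ n then (if n % 2 = 0 then n / 6 + (n-2) / 6 + 2 else - (n / 6 + 1)) else 0

set_option maxHeartbeats 4000000 in
theorem rec34 (n : ℤ) : p34 n - p34 (n-3) - p34 (n-4) + p34 (n-7) = if n = 0 then 1 else 0 := by
  unfold p34; split_ifs <;> omega

set_option maxHeartbeats 4000000 in
theorem rec24 (n : ℤ) : p24 n - p24 (n-2) - p24 (n-4) + p24 (n-6) = if n = 0 then 1 else 0 := by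
  unfold p24; split_ifs <;> omega

set_option maxHeartbeats 4000000 in
theorem recr (n : ℤ) : pr n - pr (n-4) - pr (n-6) + pr (n-10) = if n = 0 then 1 else if n = 1 then -1 else if n = 2 then 1 else 0 := by
  unfold pr; split_ifs <;> omega

set_option maxHeartbeats 4000000 in
theorem recs (n : ℤ) : ps n - ps (n-2) - ps (n-6) + ps (n-8) = if n = 0 then 1 else if n = 1 then -1 else if n = 2 then 1 else 0 := by
  unfold ps; split_ifs <;> omega

set_option maxHeartbeats 4000000 in
theorem r34 (n : ℤ) : p34 n - p34 (-n-7) = n / 3 + (-n) / 4 + 1 := by unfold p34; split_ifs <;> omega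

set_option maxHeartbeats 4000000 in
theorem r24 (n : ℤ) : p24 n - p24 (-n-6) = (if n % 2 = 0 then n / 4 + 1 else 0) := by unfold p24; split_ifs <;> omega

set_option maxHeartbeats 4000000 in
theorem rr (n : ℤ) : pr n - pr (-n-8) = (if n % 2 = 0 then n / 6 + 1 else - (n / 4 + (-(n / 2)) / 3 + 1)) := by
  unfold pr; split_ifs <;> omega

set_option maxHeartbeats 4000000 in
theorem rs (n : ℤ) : ps n - ps (-n-6) = (if n % 2 = 0 then n / 6 + (n-2) / 6 + 2 else - (n / 6 + 1)) := by
  unfold ps; split_ifs <;> omega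

set_option maxHeartbeats 4000000 in
theorem Laux (x y i j : ℤ) (hi : 0 ≤ i) (hi6 : i < 6) (hj : 0 ≤ j) (hj3 : j < 3) :
   (6*x+i) / 3 - (6*x+i-(3*y+j)-4)/3 - 1
   - (if ((6*x+i)+2*(3*y+j)-3) % 2 = 0 then ((6*x+i)+2*(3*y+j)-3) / 6 + 1 else - (((6*x+i)+2*(3*y+j)-3) / 4 + (-(((6*x+i)+2*(3*y+j)-3) / 2)) / 3 + 1))
   - (if ((6*x+i)-4) % 2 = 0 then ((6*x+i)-4) / 6 + (((6*x+i)-4)-2) / 6 + 2 else - (((6*x+i)-4) / 6 + 1))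
   + (if ((6*x+i)-2*(3*y+j)-6) % 2 = 0 then ((6*x+i)-2*(3*y+j)-6) / 4 + 1 else 0) = 0 := by
  interval_cases i <;> interval_cases j <;> split_ifs <;> omega

set_option maxHeartbeats 4000000 in
theorem L (b n c : ℤ) : (p34 (n+3*b+3*c) - p34 (-(n+3*b+3*c)-7)) - (p34 (n+3*b-c-4) - p34 (-(n+3*b-c-4)-7))
    - (pr (n+2*c-3) - pr (-(n+2*c-3)-8)) - (ps (n-4) - ps (-(n-4)-6)) + (p24 (n-2*c-6) - p24 (-(n-2*c-6)-6)) = 0 := by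
  rw [r34, r34, rr, rs, r24]
  have := Laux (n/6) (c/3) (n%6) (c%3) (by omega) (by omega) (by omega) (by omega)
  rw [show 6*(n/6)+n%6 = n by omega, show 3*(c/3)+c%3=c by omega] at this
  have e1 : (n+3*b+3*c) / 3 + (-(n+3*b+3*c)) / 4 + 1 - ((n+3*b-c-4) / 3 + (-(n+3*b-c-4)) / 4 + 1) = n/3 - (n-c-4)/3 - 1 := by omega
  linarith

/-- coefficient of `v^k` in `(1-v^2) F`. -/
def gg (a b c k : ℤ) : ℤ :=
  p34 (k+(a+2*b+3*c))-p34 (k+(a+2*b-c-4))-pr (k+(a+2*c-b-3))-ps (k+(a-b-4))+p24 (k+(a-b-2*c-6))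
  - (p34 (k-(a+2*b+3*c)-9)-p34 (k-(a+2*b-c)-5)-pr (k-(a+2*c-b)-7)+p24 (k-(a-b-2*c)-2)-ps (k-(a-b)-4))

set_option maxHeartbeats 4000000 in
theorem gg_anti (a b c k : ℤ) : gg a b c k + gg a b c (2-k) = 0 := by
  have h := L b (k+a-b) c
  have h' := L b (2-k+a-b) c
  unfold gg
  ring_nf at h h' ⊢
  linarith

set_option maxHeartbeats 4000000 in
theorem p24_mono (n K : ℤ) (hK : 0 ≤ K) : p24 (n - 2 * K) ≤ p24 n := by
  unfold p24; split_ifs <;> omega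

set_option maxHeartbeats 4000000 in
theorem diff34 (d b c : ℤ) (hc : 0 ≤ c) (h : 0 ≤ d + 3 * b - c) :
    p34 (d+4+3*b+3*c) - p34 (d+3*b-c) = (d+4)/3 - (d-c)/3 - 1 := by
  unfold p34; rw [if_pos (by omega), if_pos (by omega)]; omega

set_option maxHeartbeats 4000000 in
theorem core2 (x y i j : ℤ)  (hc : 0 ≤ 3*y+j) (hi : 0 ≤ i) (hi6 : i < 6) (hj : 0 ≤ j) (hj3 : j < 3)
    (hd : 6*x+i ≤ -5):
  0 ≤ (6*x+i+4)/3 - (6*x+i-(3*y+j))/3 - 1 - pr (6*x+i+1+2*(3*y+j)) 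
    - p24 (2*(3*y+j)+4+(6*x+i)) := by
  unfold p24 pr
  interval_cases i <;> interval_cases j <;> split_ifs <;> omega

set_option maxHeartbeats 4000000 in
theorem core (x y i j : ℤ)  (hc : 0 ≤ 3*y+j) (hi : 0 ≤ i) (hi6 : i < 6) (hj : 0 ≤ j) (hj3 : j < 3)
    (hd : -5 ≤ 6*x+i):
  0 ≤ (6*x+i+4)/3 - (6*x+i-(3*y+j))/3 - 1 - pr (6*x+i+1+2*(3*y+j)) - ps (6*x+i) + p24 (6*x+i-2*(3*y+j)-2)
    - p24 (2*(3*y+j)-6-(6*x+i)) := by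
  unfold p24 pr ps
  interval_cases i <;> interval_cases j <;> split_ifs <;> omega

set_option maxHeartbeats 4000000 in
theorem nn2aux (a b c K x i : ℤ) (ha : 0 ≤ a) (hb : 0 ≤ b) (hc : 0 ≤ c)
    (hab : b ≤ a + 1) (hac : c ≤ a + 1) (hbc : c ≤ b + 1) (hK : 0 ≤ K) (h : a+2*b-c-4-K < 0) 
    (hi : 0 ≤ i) (hi6 : i < 12) (hx : a+2*b+3*c-K = 12 * x + i) :
  0 ≤ p34 (a+2*b+3*c-K)-pr (a+2*c-b-3-K)-ps (a-b-4-K)+p24 (a-b-2*c-6-K)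
    - p24 (b+2*c-a-2-K) := by
  rw [hx]
  have h3 : a+2*c-b-3-K ≤ 3 := by omega
  have h4 : a-b-4-K ≤ 0 := by omega
  have h5 : a-b-2*c-6-K < 0 := by omega
  have e5 : p24 (a-b-2*c-6-K) = 0 := by unfold p24; split_ifs <;> omega
  have e4 : ps (a-b-4-K) = if a-b-4-K = 0 then 1 else 0 := by unfold ps; split_ifs <;> omega
  have e3 : pr (a+2*c-b-3-K) ≤ if a+2*c-b-3-K = 0 ∨ a+2*c-b-3-K = 2 then 1 else 0 := by
    unfold pr; split_ifs <;> omega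
  suffices 0 ≤ p34 (12*x+i) - (if a+2*c-b-3-K = 0 ∨ a+2*c-b-3-K = 2 then 1 else 0) - (if a-b-4-K = 0 then 1 else 0) -  p24 (b+2*c-a-2-K) by linarith
  unfold p34 p24
  interval_cases i <;> split_ifs <;> omega

set_option maxHeartbeats 4000000 in
theorem nn2 (a b c K : ℤ) (ha : 0 ≤ a) (hb : 0 ≤ b) (hc : 0 ≤ c)
    (hab : b ≤ a + 1) (hac : c ≤ a + 1) (hbc : c ≤ b + 1) (hK : 0 ≤ K) (h : a+2*b-c-4-K < 0) :
  0 ≤ p34 (a+2*b+3*c-K)-p34 (a+2*b-c-4-K)-pr (a+2*c-b-3-K)-ps (a-b-4-K)+p24 (a-b-2*c-6-K)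
    - p24 (b+2*c-a-2-K) := by
  have e2 : p34 (a+2*b-c-4-K) = 0 := by unfold p34; split_ifs <;> omega
  have := nn2aux a b c K ((a+2*b+3*c-K)/12) ((a+2*b+3*c-K)%12) ha hb hc hab hac hbc hK h (by omega) (by omega) (by omega)
  omega

theorem nn (a b c K : ℤ) (ha : 0 ≤ a) (hb : 0 ≤ b) (hc : 0 ≤ c)
    (hab : b ≤ a + 1) (hac : c ≤ a + 1) (hbc : c ≤ b + 1) (hK : 0 ≤ K) :
    0 ≤ p34 (a+2*b+3*c-K)-p34 (a+2*b-c-4-K)-pr (a+2*c-b-3-K)-ps (a-b-4-K)+p24 (a-b-2*c-6-K)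
    - p24 (b+2*c-a-2-K) := by
  by_cases h : a+2*b-c-4-K < 0
  · exact nn2 a b c K ha hb hc hab hac hbc hK h
  obtain ⟨d, hd⟩ : ∃ d, d = a - b - 4 - K := ⟨_, rfl⟩
  have h34 := diff34 d b c hc (by omega)
  rw [show a+2*b+3*c-K = d+4+3*b+3*c by omega, show a+2*b-c-4-K = d+3*b-c by omega, h34,
    show a+2*c-b-3-K = d+1+2*c by omega, ← hd, show a-b-2*c-6-K = d-2*c-2 by omega]
  by_cases h5 : -5 ≤ d
  · have k1 := core (d/6) (c/3) (d%6) (c%3) (by omega) (by omega) (by omega) (by omega) (by omega) (by omega)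
    rw [show 6*(d/6)+d%6 = d by omega, show 3*(c/3)+c%3 = c by omega] at k1
    have k2 := p24_mono (2*c-6-d) K hK
    rw [show 2*c-6-d-2*K = b+2*c-a-2-K by omega] at k2
    linarith
  · have k1 := core2 (d/6) (c/3) (d%6) (c%3) (by omega) (by omega) (by omega) (by omega) (by omega) (by omega)
    rw [show 6*(d/6)+d%6 = d by omega, show 3*(c/3)+c%3 = c by omega] at k1
    have k2 := p24_mono (2*c+4+d) (d+5+K) (by omega)
    rw [show 2*c+4+d-2*(d+5+K) = b+2*c-a-2-K by omega] at k2
    have k3 : ps d = 0 := if_neg (by omega)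
    have k4 : p24 (d-2*c-2) = 0 := if_neg (by omega)
    linarith

theorem H1 {F : Type*} [Field F] (a b c : ℤ) (v P Q R S : F) (hv : v ≠ 0) (h2 : 1 - v^2 ≠ 0) (h3 : 1 - v^3 ≠ 0)
    (h4 : 1 - v^4 ≠ 0) (h6 : 1 + v^3 ≠ 0)
    (hP : P * ((1-v^3)*(1-v^4)) = 1) (hQ : Q * ((1-v^2)*(1-v^4)) = 1)
    (hR : R * ((1-v^4)*(1-v^6)) = 1 - v + v^2) (hS : S * ((1-v^2)*(1-v^6)) = 1 - v + v^2) :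
    H₃ a b c v⁻¹ v = v^(-(a+2*b+3*c)) * P - v^(-(a+2*b-c-4)) * P - v^(-(a+2*c-b-3)) * R
      - v^(-(a-b-4)) * S + v^(-(a-b-2*c-6)) * Q := by
  have e6 : (1 - v^6) = (1-v^3)*(1+v^3) := by ring
  rw [e6] at hR hS
  rw [← eq_div_iff (by simp [h2, h3, h4, h6])] at hP hQ hR hS
  subst hP hQ hR hS
  have d1 : 1 - v/(v⁻¹)^2 = 1 - v^3 := by field_simp
  have d2 : 1 - v/(v⁻¹)^3 = 1 - v^4 := by field_simp
  have d3 : 1 - (v⁻¹)^3/v = -(1 - v^4)/v^4 := by field_simp; ring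
  have d4 : 1 - v^2/(v⁻¹)^2 = 1 - v^4 := by field_simp
  have d5 : 1 - (v⁻¹)^2/v = -(1 - v^3)/v^3 := by field_simp; ring
  have d6 : 1 - v/v⁻¹ = 1 - v^2 := by field_simp
  have d7 : 1 - (v⁻¹)^2/v^2 = -(1 - v^4)/v^4 := by field_simp; ring
  have d8 : 1 - v⁻¹/v = -(1 - v^2)/v^2 := by field_simp; ring
  have d9 : 1 - v⁻¹ = -(1 - v)/v := by field_simp; ring
  unfold H₃
  simp only [d1, d2, d3, d4, d5, d6, d7, d8, d9, inv_zpow']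
  have n1 : v^(-(a+2*b-c-4)) = v^(-(a+2*b)) * v^c * v^4 := by
    rw [← zpow_natCast v 4, ← zpow_add₀ hv, ← zpow_add₀ hv]; congr 1; push_cast; ring
  have n2 : v^(-(a+2*c-b-3)) = v^(-(a+2*c)) * v^b * v^3 := by
    rw [← zpow_natCast v 3, ← zpow_add₀ hv, ← zpow_add₀ hv]; congr 1; push_cast; ring
  have n3 : v^(-(a-b-4)) = v^(-(a+c)) * v^(b+c) * v^4 := by
    rw [← zpow_natCast v 4, ← zpow_add₀ hv, ← zpow_add₀ hv]; congr 1; push_cast; ring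
  have n4 : v^(-(a-b-2*c-6)) = v^(-a) * v^(b+2*c) * v^6 := by
    rw [← zpow_natCast v 6, ← zpow_add₀ hv, ← zpow_add₀ hv]; congr 1; push_cast; ring
  rw [n1, n2, n3, n4]
  generalize v^(-(a+2*b+3*c)) = X1
  generalize v^(-(a+2*b)) * v^c = X2
  generalize v^(-(a+2*c)) * v^b = X3
  generalize v^(-(a+c)) * v^(b+c) = X5
  generalize v^(-a) * v^(b+2*c) = X4
  have t2 : X2 / ((1-v^3)*(-(1-v^4)/v^4)) = - (X2 * v^4 * (1/((1-v^3)*(1-v^4)))) := by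
    field_simp
  have t3 : X3 * (1 - v) / ((1-v^4)*(-(1-v^3)/v^3)*(1-v^2)) = -(X3 * v^3 * ((1-v+v^2)/((1-v^4)*((1-v^3)*(1+v^3))))) := by
    field_simp; ring
  have t4 : X4 / ((-(1-v^4)/v^4)*(-(1-v^2)/v^2)) = X4 * v^6 * (1/((1-v^2)*(1-v^4))) := by
    field_simp
  have t5 : X5 * (-(1 - v)/v) / ((-(1-v^3)/v^3)*(-(1-v^2)/v^2)*(1-v^2)) = -(X5 * v^4 * ((1-v+v^2)/((1-v^2)*((1-v^3)*(1+v^3))))) := by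
    field_simp; ring
  rw [t2, t3, t4, t5]
  ring

theorem H2 {F : Type*} [Field F] (a b c : ℤ) (v P Q R S : F) (hv : v ≠ 0) (h2 : 1 - v^2 ≠ 0) (h3 : 1 - v^3 ≠ 0)
    (h4 : 1 - v^4 ≠ 0) (h6 : 1 + v^3 ≠ 0)
    (hP : P * ((1-v^3)*(1-v^4)) = 1) (hQ : Q * ((1-v^2)*(1-v^4)) = 1)
    (hR : R * ((1-v^4)*(1-v^6)) = 1 - v + v^2) (hS : S * ((1-v^2)*(1-v^6)) = 1 - v + v^2) :
    v^2 * H₃ a b c v v⁻¹ = v^(a+2*b+3*c+9) * P - v^(a+2*b-c+5) * P - v^(a+2*c-b+7) * R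
      + v^(a-b-2*c+2) * Q - v^(a-b+4) * S := by
  have e6 : (1 - v^6) = (1-v^3)*(1+v^3) := by ring
  rw [e6] at hR hS
  rw [← eq_div_iff (by simp [h2, h3, h4, h6])] at hP hQ hR hS
  subst hP hQ hR hS
  have d1 : 1 - v⁻¹/v^2 = -(1 - v^3)/v^3 := by field_simp; ring
  have d2 : 1 - v⁻¹/v^3 = -(1 - v^4)/v^4 := by field_simp; ring
  have d3 : 1 - v^3/v⁻¹ = 1 - v^4 := by field_simp
  have d4 : 1 - (v⁻¹)^2/v^2 = -(1 - v^4)/v^4 := by field_simp; ring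
  have d5 : 1 - v^2/v⁻¹ = 1 - v^3 := by field_simp
  have d6 : 1 - v/v⁻¹ = 1 - v^2 := by field_simp
  have d7 : 1 - v^2/(v⁻¹)^2 = 1 - v^4 := by field_simp
  have d8 : 1 - v⁻¹/v = -(1 - v^2)/v^2 := by field_simp; ring
  have d9 : 1 - v⁻¹ = -(1 - v)/v := by field_simp; ring
  unfold H₃
  simp only [d1, d2, d3, d4, d5, d6, d7, d8, d9, inv_zpow']
  have n0 : v^(a+2*b+3*c+9) = v^(a+2*b+3*c) * v^9 := by
    rw [← zpow_natCast v 9, ← zpow_add₀ hv]; congr 1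
  have n1 : v^(a+2*b-c+5) = v^(a+2*b) * v^(-c) * v^5 := by
    rw [← zpow_natCast v 5, ← zpow_add₀ hv, ← zpow_add₀ hv]; congr 1
  have n2 : v^(a+2*c-b+7) = v^(a+2*c) * v^(-b) * v^7 := by
    rw [← zpow_natCast v 7, ← zpow_add₀ hv, ← zpow_add₀ hv]; congr 1
  have n3 : v^(a-b+4) = v^(a+c) * v^(-(b+c)) * v^4 := by
    rw [← zpow_natCast v 4, ← zpow_add₀ hv, ← zpow_add₀ hv]; congr 1; push_cast; ring
  have n4 : v^(a-b-2*c+2) = v^a * v^(-(b+2*c)) * v^2 := by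
    rw [← zpow_natCast v 2, ← zpow_add₀ hv, ← zpow_add₀ hv]; congr 1; push_cast; ring
  rw [n0, n1, n2, n3, n4]
  generalize v^(a+2*b+3*c) = X1
  generalize v^(a+2*b) * v^(-c) = X2
  generalize v^(a+2*c) * v^(-b) = X3
  generalize v^(a+c) * v^(-(b+c)) = X5
  generalize v^a * v^(-(b+2*c)) = X4
  have t1 : X1 / ((-(1-v^3)/v^3)*(-(1-v^4)/v^4)) = X1 * v^7 * (1/((1-v^3)*(1-v^4))) := by
    field_simp
  have t2 : X2 / ((-(1-v^3)/v^3)*(1-v^4)) = - (X2 * v^3 * (1/((1-v^3)*(1-v^4)))) := by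
    field_simp
  have t3 : X3 * (-(1 - v)/v) / ((-(1-v^4)/v^4)*(1-v^3)*(-(1-v^2)/v^2)) = -(X3 * v^5 * ((1-v+v^2)/((1-v^4)*((1-v^3)*(1+v^3))))) := by
    field_simp; ring
  have t4 : X4 / ((1-v^4)*(1-v^2)) = X4 * (1/((1-v^2)*(1-v^4))) := by
    field_simp
  have t5 : X5 * (1 - v) / ((1-v^3)*(1-v^2)*(-(1-v^2)/v^2)) = -(X5 * v^2 * ((1-v+v^2)/((1-v^2)*((1-v^3)*(1+v^3))))) := by
    field_simp; ring
  rw [t1, t2, t3, t4, t5]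
  ring

theorem FH {F : Type*} [Field F] (a b c : ℤ) (v : F) (hv : v ≠ 0) (h2 : 1 - v^2 ≠ 0) :
    (1 - v^2) * F₃ a b c v v⁻¹ = H₃ a b c v⁻¹ v - v^2 * H₃ a b c v v⁻¹ := by
  unfold F₃
  have d6 : 1 - v/v⁻¹ = 1 - v^2 := by field_simp
  have d8 : 1 - v⁻¹/v = -(1 - v^2)/v^2 := by field_simp; ring
  rw [d6, d8]
  field_simp
  ring

/-- Laurent series with coefficients `f` (for `f` vanishing on negative integers). -/
def ser (f : ℤ → ℤ) (hf : ∀ n < 0, f n = 0) : LaurentSeries ℚ :=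
  HahnSeries.ofSuppBddBelow (fun n => (f n : ℚ)) ⟨0, fun n hn => by
    by_contra h
    exact hn (by simp [hf n (not_le.mp h)])⟩

theorem ser_coeff (f : ℤ → ℤ) (hf) (n : ℤ) : (ser f hf).coeff n = f n := rfl

/-- the Laurent series variable -/
def vv : LaurentSeries ℚ := HahnSeries.single 1 1

theorem vv_zpow (n : ℤ) : vv ^ n = HahnSeries.single n 1 := (RatFunc.single_zpow n).symm

theorem vv_pow (n : ℕ) : vv ^ n = HahnSeries.single (n : ℤ) 1 := by rw [← zpow_natCast, vv_zpow]

theorem coeff_vv (n k : ℤ) (x : LaurentSeries ℚ) : (vv ^ n * x).coeff k = x.coeff (k - n) := by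
  rw [vv_zpow, HahnSeries.coeff_single_mul, one_mul]

theorem coeff_vv' (n : ℕ) (k : ℤ) (x : LaurentSeries ℚ) : (vv ^ n * x).coeff k = x.coeff (k - n) := by
  rw [← zpow_natCast, coeff_vv]

theorem coeff_vvp (n : ℕ) (k : ℤ) : (vv ^ n).coeff k = if k = n then 1 else 0 := by
  rw [vv_pow, HahnSeries.coeff_single]
  congr

theorem vv_ne : vv ≠ 0 := by simp [vv]

theorem one_sub_ne (n : ℕ) (hn : 0 < n) : (1 : LaurentSeries ℚ) - vv ^ n ≠ 0 := by
  intro h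
  have := congrArg (fun x : LaurentSeries ℚ => x.coeff (0 : ℤ)) h
  have hn' : ¬ (0 : ℤ) = n := by omega
  simp only [HahnSeries.coeff_sub, coeff_vvp, HahnSeries.coeff_one, HahnSeries.coeff_zero, hn', if_false] at this
  simp at this

theorem one_add_ne (n : ℕ) (hn : 0 < n) : (1 : LaurentSeries ℚ) + vv ^ n ≠ 0 := by
  intro h
  have := congrArg (fun x : LaurentSeries ℚ => x.coeff (0 : ℤ)) h
  have hn' : ¬ (0 : ℤ) = n := by omega
  simp only [HahnSeries.coeff_add, coeff_vvp, HahnSeries.coeff_one, HahnSeries.coeff_zero, hn', if_false] at this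
  simp at this

theorem coeff_prod (i j : ℕ) (x : LaurentSeries ℚ) (k : ℤ) :
    (x * ((1 - vv^i) * (1 - vv^j))).coeff k =
      x.coeff k - x.coeff (k - i) - x.coeff (k - j) + x.coeff (k - (i + j)) := by
  have : x * ((1 - vv^i) * (1 - vv^j)) = x - vv^i * x - vv^j * x + vv^(i+j) * x := by ring
  rw [this]
  simp only [HahnSeries.coeff_sub, HahnSeries.coeff_add, coeff_vv']
  push_cast; rfl

theorem p34_neg : ∀ n < 0, p34 n = 0 := fun _ hn => if_neg (not_le.mpr hn)
theorem p24_neg : ∀ n < 0, p24 n = 0 := fun _ hn => if_neg (not_le.mpr hn)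
theorem pr_neg : ∀ n < 0, pr n = 0 := fun _ hn => if_neg (not_le.mpr hn)
theorem ps_neg : ∀ n < 0, ps n = 0 := fun _ hn => if_neg (not_le.mpr hn)

theorem hP : ser p34 p34_neg * ((1 - vv^3) * (1 - vv^4)) = 1 := by
  ext k
  rw [coeff_prod]
  simp only [ser_coeff, HahnSeries.coeff_one]
  have := rec34 k
  exact_mod_cast this

theorem hQ : ser p24 p24_neg * ((1 - vv^2) * (1 - vv^4)) = 1 := by
  ext k
  rw [coeff_prod]
  simp only [ser_coeff, HahnSeries.coeff_one]
  have := rec24 k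
  exact_mod_cast this

theorem coeff_num (k : ℤ) : (1 - vv + vv^2).coeff k =
    ((if k = 0 then 1 else if k = 1 then -1 else if k = 2 then 1 else 0 : ℤ) : ℚ) := by
  have : (1 - vv + vv^2) = 1 - vv^1 + vv^2 := by ring
  rw [this]
  simp only [HahnSeries.coeff_sub, HahnSeries.coeff_add, coeff_vvp, HahnSeries.coeff_one]
  push_cast
  split_ifs <;> first | omega | norm_num

theorem hR : ser pr pr_neg * ((1 - vv^4) * (1 - vv^6)) = 1 - vv + vv^2 := by
  ext k
  rw [coeff_prod, coeff_num, ← recr k]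
  simp only [ser_coeff]
  push_cast
  norm_num

theorem hS : ser ps ps_neg * ((1 - vv^2) * (1 - vv^6)) = 1 - vv + vv^2 := by
  ext k
  rw [coeff_prod, coeff_num, ← recs k]
  simp only [ser_coeff]
  push_cast
  norm_num

theorem F_coeff (a b c k : ℤ) :
    (F₃ a b c vv vv⁻¹).coeff k - (F₃ a b c vv vv⁻¹).coeff (k - 2) = gg a b c k := by
  have h := FH a b c vv vv_ne (one_sub_ne 2 (by norm_num))
  rw [H1 a b c vv _ _ _ _ vv_ne (one_sub_ne 2 (by norm_num)) (one_sub_ne 3 (by norm_num))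
      (one_sub_ne 4 (by norm_num)) (one_add_ne 3 (by norm_num)) hP hQ hR hS,
    H2 a b c vv _ _ _ _ vv_ne (one_sub_ne 2 (by norm_num)) (one_sub_ne 3 (by norm_num))
      (one_sub_ne 4 (by norm_num)) (one_add_ne 3 (by norm_num)) hP hQ hR hS, sub_mul, one_mul] at h
  have h' := congrArg (fun x => HahnSeries.coeff x k) h
  simp only [HahnSeries.coeff_sub, HahnSeries.coeff_add, coeff_vv', coeff_vv, ser_coeff] at h'
  push_cast at h'
  rw [h']
  unfold gg
  push_cast
  congr 1
  · ring_nf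
  · ring_nf

/-- The embedding of `ℚ(u)` into Laurent series. -/
def phi : K1 →+* LaurentSeries ℚ :=
  IsFractionRing.lift (A := Polynomial ℚ) (K := K1)
    (g := (HahnSeries.ofPowerSeries ℤ ℚ).comp (Polynomial.coeToPowerSeries.ringHom (R := ℚ)))
    (HahnSeries.ofPowerSeries_injective.comp (Polynomial.coe_injective ℚ))

theorem phi_u : phi u = vv := by
  unfold phi u
  rw [IsFractionRing.lift_algebraMap]
  simp [vv]

theorem phi_F (a b c : ℤ) : phi (F₃ a b c u u⁻¹) = F₃ a b c vv vv⁻¹ := by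
  simp only [F₃, H₃, map_add, map_div₀, map_mul, map_sub, map_one, map_pow, map_zpow₀, map_inv₀, phi_u]

theorem gg_nonneg (a b c k : ℤ) (ha : 0 ≤ a) (hb : 0 ≤ b) (hc : 0 ≤ c)
    (hab : b ≤ a + 1) (hac : c ≤ a + 1) (hbc : c ≤ b + 1) (hk : k ≤ 0) : 0 ≤ gg a b c k := by
  have h := nn a b c (-k) ha hb hc hab hac hbc (by omega)
  unfold gg
  rw [p34_neg (k-(a+2*b+3*c)-9) (by omega), p34_neg (k-(a+2*b-c)-5) (by omega),
    pr_neg (k-(a+2*c-b)-7) (by omega), ps_neg (k-(a-b)-4) (by omega)]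
  ring_nf at h ⊢
  exact h

theorem F₃_specialization_unimodal (a b c : ℤ) (ha : 0 ≤ a) (hb : 0 ≤ b) (hc : 0 ≤ c)
    (hab : b ≤ a + 1) (hac : c ≤ a + 1) (hbc : c ≤ b + 1) :
    ∃ (s : Finset ℤ) (coef : ℤ → ℕ),
      (∀ k : ℤ, k ∉ s → coef k = 0) ∧
      (∀ k : ℤ, coef k = coef (-k)) ∧
      (∀ k : ℤ, 0 ≤ k → coef (k + 2) ≤ coef k) ∧
      F₃ a b c u u⁻¹ = ∑ k ∈ s, (coef k : K1) * u ^ k := by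
  set f : ℤ → ℚ := fun k => (F₃ a b c vv vv⁻¹).coeff k with hf
  have step : ∀ k, f k - f (k - 2) = gg a b c k := F_coeff a b c
  have anti : ∀ k, (gg a b c k : ℚ) + gg a b c (2 - k) = 0 := fun k => by
    exact_mod_cast gg_anti a b c k
  obtain ⟨N, hN⟩ : ∃ N : ℤ, ∀ k < N, f k = 0 :=
    ⟨_, fun k hk => HahnSeries.coeff_eq_zero_of_lt_order hk⟩
  -- symmetry
  have sym : ∀ k, f k = f (-k) := by
    have s0 : ∀ k, f k - f (-k) = f (k - 2) - f (-(k - 2)) := fun k => by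
      have h1 := step k
      have h2 := step (2 - k)
      have h3 := anti k
      rw [show 2 - k - 2 = -k by ring] at h2
      rw [show -(k-2) = 2 - k by ring]
      linarith
    have s1 : f 1 - f (-1) = 0 := by
      have h1 := step 1
      have h3 := anti 1
      norm_num at h1 h3
      rw [h1, h3]; simp
    have s2 : ∀ n : ℕ, f n - f (-n) = 0 ∧ f (n + 1 : ℤ) - f (-(n + 1 : ℤ)) = 0 := by
      intro n
      induction n with
      | zero => simpa using s1
      | succ n ih =>
        refine ⟨by exact_mod_cast ih.2, ?_⟩
        rw [s0]
        push_cast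
        rw [show (n : ℤ) + 1 + 1 - 2 = n by ring]
        exact ih.1
    intro k
    rcases le_total 0 k with h | h
    · obtain ⟨n, rfl⟩ := Int.eq_ofNat_of_zero_le h
      linarith [(s2 n).1]
    · obtain ⟨n, hn⟩ := Int.eq_ofNat_of_zero_le (show 0 ≤ -k by omega)
      have := (s2 n).1
      rw [← hn, neg_neg] at this
      linarith
  have nat1 : ∀ n : ℕ, ∀ k ≤ 0, k < N + 2 * n → ∃ m : ℕ, f k = m := by
    intro n
    induction n with
    | zero => exact fun k _ h => ⟨0, by rw [hN k (by simpa using h)]; simp⟩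
    | succ n ih =>
      intro k hk h
      push_cast at h
      obtain ⟨m, hm⟩ := ih (k - 2) (by omega) (by omega)
      obtain ⟨g, hg⟩ := Int.eq_ofNat_of_zero_le (gg_nonneg a b c k ha hb hc hab hac hbc hk)
      refine ⟨m + g, ?_⟩
      have h1 := step k
      rw [hg, hm] at h1
      push_cast at h1 ⊢
      linarith
  have nat2 : ∀ k ≤ 0, ∃ m : ℕ, f k = m := fun k hk =>
    nat1 ((k - N).toNat + 1) k hk (by push_cast; omega)
  have nat3 : ∀ k, ∃ m : ℕ, f k = m := fun k => by
    rcases le_total k 0 with h | h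
    · exact nat2 k h
    · rw [sym]; exact nat2 (-k) (by omega)
  choose coef hcoef using nat3
  have supp : ∀ k : ℤ, k ∉ Finset.Icc (-|N|) |N| → coef k = 0 := by
    intro k hk
    have : f k = 0 := by
      rw [Finset.mem_Icc, not_and_or, not_le, not_le] at hk
      have := neg_abs_le N
      rcases hk with h | h
      · exact hN k (by omega)
      · rw [sym]; exact hN (-k) (by omega)
    rw [hcoef] at this
    exact_mod_cast this
  refine ⟨Finset.Icc (-|N|) |N|, coef, supp, ?_, ?_, ?_⟩
  · intro k
    have := sym k
    rw [hcoef, hcoef] at this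
    exact_mod_cast this
  · intro k hk
    have h1 := step (k + 2)
    have h2 := anti (k + 2)
    have h3 : (0 : ℚ) ≤ gg a b c (2 - (k + 2)) := by
      exact_mod_cast gg_nonneg a b c _ ha hb hc hab hac hbc (by omega)
    rw [show k + 2 - 2 = k by ring, hcoef, hcoef] at h1
    have : (coef (k + 2) : ℚ) ≤ coef k := by linarith
    exact_mod_cast this
  · apply phi.injective
    rw [phi_F, map_sum]
    ext k
    have : ∀ i, (phi ((coef i : K1) * u ^ i)).coeff k = if k = i then (coef i : ℚ) else 0 := by
      intro i
      rw [map_mul, map_natCast, map_zpow₀, phi_u, ← nsmul_eq_mul, HahnSeries.coeff_smul, vv_zpow,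
        HahnSeries.coeff_single]
      split_ifs <;> simp
    rw [HahnSeries.coeff_sum, Finset.sum_congr rfl (fun i _ => this i), Finset.sum_ite_eq]
    split_ifs with h
    · exact hcoef k
    · have := hcoef k
      rw [supp k h] at this
      simpa using this
end
end

section
/- Let a, b, c be nonnegative integers with a ≥ b−1 and a, b ≥ c−1. The map Ψ(E,F) = (E+F−ε^{EF}, F+ε^{EF}) restricts to a bijection from the set of tail index pairs onto the set of pseudohead index pairs, with inverse (i,j) ↦ (i−j+2ε_{ij}, j−ε_{ij}); moreover, whenever Ψ(E,F) = (i,j) the area ranges coincide: R^{EF} = R_{ij}. -/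
/-- `⌈m/2⌉` for an integer `m`, computed as `⌊(m+1)/2⌋`. -/
def ceilHalf (m : ℤ) : ℤ := Int.fdiv (m + 1) 2

/-- `ε^{EF} = max(0, E+2F−b−c)` for tails. -/
def epsT (b c E F : ℤ) : ℤ := max 0 (E + 2 * F - b - c)

/-- `δ^{EF} = ⌈(E+F−a)/2⌉` for tails. -/
def delT (a E F : ℤ) : ℤ := ceilHalf (E + F - a)

/-- `(E,F)` is a tail index pair. -/
def IsTail (a b c E F : ℤ) : Prop :=
  0 ≤ F ∧ F ≤ c - epsT b c E F ∧ 2 * epsT b c E F ≤ E ∧ E ≤ F + a ∧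
    4 * E + 5 * F - 3 * epsT b c E F ≤ a + 3 * b + 3 * c

/-- `ε_{ij} = max(0, i+j−b−c)` for pseudoheads. -/
def epsP (b c i j : ℤ) : ℤ := max 0 (i + j - b - c)

/-- `δ_{ij} = ⌈(i+ε_{ij}−a)/2⌉` for pseudoheads. -/
def delP (a b c i j : ℤ) : ℤ := ceilHalf (i + epsP b c i j - a)

/-- `(i,j)` is a pseudohead index pair. -/
def IsPseudohead (a b c i j : ℤ) : Prop :=
  0 ≤ j ∧ j ≤ c ∧ j ≤ i ∧ i ≤ b + c ∧ 4 * i + j ≤ a + 3 * b + 3 * c ∧ i - 2 * j ≤ a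

theorem tails_to_pseudoheads (a b c : ℤ) (ha : 0 ≤ a) (hb : 0 ≤ b) (hc : 0 ≤ c)
    (hab : b - 1 ≤ a) (hac : c - 1 ≤ a) (hbc : c - 1 ≤ b) :
    Set.BijOn (fun p : ℤ × ℤ => (p.1 + p.2 - epsT b c p.1 p.2, p.2 + epsT b c p.1 p.2))
        {p : ℤ × ℤ | IsTail a b c p.1 p.2} {p : ℤ × ℤ | IsPseudohead a b c p.1 p.2} ∧
    Set.InvOn (fun p : ℤ × ℤ => (p.1 - p.2 + 2 * epsP b c p.1 p.2, p.2 - epsP b c p.1 p.2))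
        (fun p : ℤ × ℤ => (p.1 + p.2 - epsT b c p.1 p.2, p.2 + epsT b c p.1 p.2))
        {p : ℤ × ℤ | IsTail a b c p.1 p.2} {p : ℤ × ℤ | IsPseudohead a b c p.1 p.2} ∧
    ∀ E F i j : ℤ, IsTail a b c E F →
      (E + F - epsT b c E F, F + epsT b c E F) = (i, j) →
        E + F = i + epsP b c i j ∧
          a + 2 * b + 3 * c - 2 * E - 3 * F + max (epsT b c E F) (delT a E F)
            = a + 2 * b + 3 * c - 2 * i - j + max 0 (delP a b c i j - epsP b c i j) := by
  have key : ∀ E F, epsP b c (E + F - epsT b c E F) (F + epsT b c E F) = epsT b c E F := by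
    intro E F
    unfold epsP
    conv_rhs => unfold epsT
    congr 1
    ring
  have key2 : ∀ i j, epsT b c (i - j + 2 * epsP b c i j) (j - epsP b c i j) = epsP b c i j := by
    intro i j
    unfold epsT
    conv_rhs => unfold epsP
    congr 1
    ring
  have m1 : Set.MapsTo
      (fun p : ℤ × ℤ => (p.1 + p.2 - epsT b c p.1 p.2, p.2 + epsT b c p.1 p.2))
      {p : ℤ × ℤ | IsTail a b c p.1 p.2} {p : ℤ × ℤ | IsPseudohead a b c p.1 p.2} := by
    rintro ⟨E, F⟩ h
    simp only [Set.mem_setOf_eq, IsTail, IsPseudohead, epsT] at h ⊢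
    omega
  have m2 : Set.MapsTo
      (fun p : ℤ × ℤ => (p.1 - p.2 + 2 * epsP b c p.1 p.2, p.2 - epsP b c p.1 p.2))
      {p : ℤ × ℤ | IsPseudohead a b c p.1 p.2} {p : ℤ × ℤ | IsTail a b c p.1 p.2} := by
    rintro ⟨i, j⟩ h
    simp only [Set.mem_setOf_eq, IsTail, IsPseudohead, key2] at h ⊢
    simp only [epsP]
    omega
  have inv : Set.InvOn
      (fun p : ℤ × ℤ => (p.1 - p.2 + 2 * epsP b c p.1 p.2, p.2 - epsP b c p.1 p.2))
      (fun p : ℤ × ℤ => (p.1 + p.2 - epsT b c p.1 p.2, p.2 + epsT b c p.1 p.2))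
      {p : ℤ × ℤ | IsTail a b c p.1 p.2} {p : ℤ × ℤ | IsPseudohead a b c p.1 p.2} := by
    constructor
    · rintro ⟨E, F⟩ _
      simp only [key, Prod.mk.injEq]
      constructor <;> ring
    · rintro ⟨i, j⟩ _
      simp only [key2, Prod.mk.injEq]
      constructor <;> ring
  refine ⟨inv.bijOn m1 m2, inv, ?_⟩
  intro E F i j _ h
  simp only [Prod.mk.injEq] at h
  obtain ⟨rfl, rfl⟩ := h
  unfold delP delT
  rw [key]
  have e : E + F - epsT b c E F + epsT b c E F - a = E + F - a := by ring
  rw [e]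
  refine ⟨by ring, ?_⟩
  omega
end

section
/- Let a, b, c be nonnegative integers with a ≥ b−1 and a, b ≥ c−1. Let P⁺ be the set of pseudohead index pairs (i,j) with δ_{ij} > ε_{ij}, and let H⁺ = {(k,ℓ) ∈ ℤ² : a < ℓ ≤ k < b+c}. Then the map Θ(i,j) = (i+j−δ_{ij}, i+ε_{ij}) restricts to a bijection from P⁺ onto H⁺, with inverse (k,ℓ) ↦ (ℓ−ε_k^ℓ, k−ℓ+ε_k^ℓ+δ_k^ℓ) where δ_k^ℓ = ⌈(ℓ−a)/2⌉ and ε_k^ℓ = max(0, k+δ_k^ℓ−b−c); moreover, whenever Θ(i,j) = (k,ℓ) the area ranges coincide: R_{ij} = [ℓ, A−k−ℓ]. In addition, no pseudohead index pair (i,j) with δ_{ij} ≤ ε_{ij} gives a triple (i,i,j) of the form (m,m,0) with (m,m) ∈ H⁺. -/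
/-- `δ_k^ℓ = ⌈(ℓ−a)/2⌉` for positive heads. -/
def delH (a l : ℤ) : ℤ := ceilHalf (l - a)

/-- `ε_k^ℓ = max(0, k+δ_k^ℓ−b−c)` for positive heads. -/
def epsH (a b c k l : ℤ) : ℤ := max 0 (k + delH a l - b - c)

theorem ceilHalf_spec (m : ℤ) : m ≤ 2 * ceilHalf m ∧ 2 * ceilHalf m ≤ m + 1 := by
  unfold ceilHalf
  rw [Int.fdiv_eq_ediv_of_nonneg _ (by norm_num)]
  omega

theorem maps_aux (a b c i j : ℤ) (hab : b - 1 ≤ a) (hac : c - 1 ≤ a) (hbc : c - 1 ≤ b)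
    (h : IsPseudohead a b c i j) (hd : epsP b c i j < delP a b c i j) :
    a < i + epsP b c i j ∧ i + epsP b c i j ≤ i + j - delP a b c i j ∧
      i + j - delP a b c i j < b + c := by
  have hs := ceilHalf_spec (i + epsP b c i j - a)
  unfold IsPseudohead at h
  unfold delP at *
  generalize ceilHalf (i + epsP b c i j - a) = d at *
  unfold epsP at *
  omega

theorem inv_maps_aux (a b c k l : ℤ) (hab : b - 1 ≤ a) (hac : c - 1 ≤ a) (hbc : c - 1 ≤ b)
    (h1 : a < l) (h2 : l ≤ k) (h3 : k < b + c) :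
    IsPseudohead a b c (l - epsH a b c k l) (k - l + epsH a b c k l + delH a l) ∧
    epsP b c (l - epsH a b c k l) (k - l + epsH a b c k l + delH a l) = epsH a b c k l ∧
    epsH a b c k l < delH a l := by
  have hs := ceilHalf_spec (l - a)
  unfold epsH delH IsPseudohead epsP at *
  generalize ceilHalf (l - a) = d at *
  omega

theorem left_aux (a b c i j : ℤ) (hd : epsP b c i j < delP a b c i j) :
    delH a (i + epsP b c i j) = delP a b c i j ∧
    epsH a b c (i + j - delP a b c i j) (i + epsP b c i j) = epsP b c i j := by
  have h : delH a (i + epsP b c i j) = delP a b c i j := rfl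
  refine ⟨h, ?_⟩
  unfold epsH
  rw [h]
  unfold epsP
  congr 1
  ring

theorem right_aux (a b c k l : ℤ) (h : epsP b c (l - epsH a b c k l)
      (k - l + epsH a b c k l + delH a l) = epsH a b c k l) :
    delP a b c (l - epsH a b c k l) (k - l + epsH a b c k l + delH a l) = delH a l := by
  unfold delP
  rw [h]
  unfold delH
  congr 1
  ring

theorem pseudoheads_to_heads (a b c : ℤ) (ha : 0 ≤ a) (hb : 0 ≤ b) (hc : 0 ≤ c)
    (hab : b - 1 ≤ a) (hac : c - 1 ≤ a) (hbc : c - 1 ≤ b) :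
    Set.BijOn (fun p : ℤ × ℤ => (p.1 + p.2 - delP a b c p.1 p.2, p.1 + epsP b c p.1 p.2))
        {p : ℤ × ℤ | IsPseudohead a b c p.1 p.2 ∧ epsP b c p.1 p.2 < delP a b c p.1 p.2}
        {p : ℤ × ℤ | a < p.2 ∧ p.2 ≤ p.1 ∧ p.1 < b + c} ∧
    Set.InvOn
        (fun p : ℤ × ℤ =>
          (p.2 - epsH a b c p.1 p.2, p.1 - p.2 + epsH a b c p.1 p.2 + delH a p.2))
        (fun p : ℤ × ℤ => (p.1 + p.2 - delP a b c p.1 p.2, p.1 + epsP b c p.1 p.2))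
        {p : ℤ × ℤ | IsPseudohead a b c p.1 p.2 ∧ epsP b c p.1 p.2 < delP a b c p.1 p.2}
        {p : ℤ × ℤ | a < p.2 ∧ p.2 ≤ p.1 ∧ p.1 < b + c} ∧
    (∀ i j k l : ℤ,
      IsPseudohead a b c i j → epsP b c i j < delP a b c i j →
        (i + j - delP a b c i j, i + epsP b c i j) = (k, l) →
          i + epsP b c i j = l ∧
            a + 2 * b + 3 * c - 2 * i - j + max 0 (delP a b c i j - epsP b c i j)
              = a + 2 * b + 3 * c - k - l) ∧
    (∀ i j : ℤ, IsPseudohead a b c i j → delP a b c i j ≤ epsP b c i j → j = 0 →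
      ¬(a < i ∧ i < b + c)) := by
  have hinv : Set.InvOn
        (fun p : ℤ × ℤ =>
          (p.2 - epsH a b c p.1 p.2, p.1 - p.2 + epsH a b c p.1 p.2 + delH a p.2))
        (fun p : ℤ × ℤ => (p.1 + p.2 - delP a b c p.1 p.2, p.1 + epsP b c p.1 p.2))
        {p : ℤ × ℤ | IsPseudohead a b c p.1 p.2 ∧ epsP b c p.1 p.2 < delP a b c p.1 p.2}
        {p : ℤ × ℤ | a < p.2 ∧ p.2 ≤ p.1 ∧ p.1 < b + c} := by
    constructor
    · rintro ⟨i, j⟩ ⟨h, hd⟩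
      obtain ⟨e1, e2⟩ := left_aux a b c i j hd
      simp only [e1, e2, Prod.mk.injEq]
      constructor <;> ring
    · rintro ⟨k, l⟩ ⟨h1, h2, h3⟩
      obtain ⟨_, e1, _⟩ := inv_maps_aux a b c k l hab hac hbc h1 h2 h3
      have e2 := right_aux a b c k l e1
      simp only [e1, e2, Prod.mk.injEq]
      constructor <;> ring
  refine ⟨hinv.bijOn ?_ ?_, hinv, ?_, ?_⟩
  · rintro ⟨i, j⟩ ⟨h, hd⟩
    exact maps_aux a b c i j hab hac hbc h hd
  · rintro ⟨k, l⟩ ⟨h1, h2, h3⟩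
    obtain ⟨h, e1, e3⟩ := inv_maps_aux a b c k l hab hac hbc h1 h2 h3
    refine ⟨h, ?_⟩
    have e2 := right_aux a b c k l e1
    simp only [e1, e2]
    exact e3
  · intro i j k l h hd he
    rw [Prod.mk.injEq] at he
    omega
  · rintro i j h hd rfl ⟨h1, h2⟩
    unfold IsPseudohead at h
    omega
end

section
/- Let a, b, c be nonnegative integers with a ≥ b−1 and a, b ≥ c−1. Call a partition μ = (x,y,z) with x ≥ y ≥ z ≥ 0, x ≤ a+b+c, y ≤ b+c, z ≤ c negative if z ≥ min(b+c−x, ⌈(y−a)/2⌉). Then every negative subpartition of λ(a,b,c) belongs to the string S(P_{ij}) for exactly one pseudohead index pair (i,j); conversely, every element of any string S(P_{ij}) is a negative subpartition of λ(a,b,c). -/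
/-- `(x,y,z)` is a subpartition of `λ(a,b,c) = (a+b+c, b+c, c)`. -/
def IsSubpartition (a b c x y z : ℤ) : Prop :=
  0 ≤ z ∧ z ≤ y ∧ y ≤ x ∧ x ≤ a + b + c ∧ y ≤ b + c ∧ z ≤ c

/-- The string `S(P_{ij})` of the pseudohead `P_{ij} = (i,i,j)`:
with `(E,F) = (i−j+2ε_{ij}, j−ε_{ij})`, `p = a+b+c−E`, `q̄ = b+c−F`, it is
`{(x,i,j) : i ≤ x < p} ∪ {(p,y,j) : i ≤ y < q̄} ∪ {(p,q̄,z) : j ≤ z ≤ c}`. -/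
def Sstring (a b c i j : ℤ) : Set (ℤ × ℤ × ℤ) :=
  {μ | (∃ x : ℤ, i ≤ x ∧ x < a + b + c - (i - j + 2 * epsP b c i j) ∧ μ = (x, i, j)) ∨
       (∃ y : ℤ, i ≤ y ∧ y < b + c - (j - epsP b c i j) ∧
          μ = (a + b + c - (i - j + 2 * epsP b c i j), y, j)) ∨
       (∃ z : ℤ, j ≤ z ∧ z ≤ c ∧
          μ = (a + b + c - (i - j + 2 * epsP b c i j), b + c - (j - epsP b c i j), z))}

theorem strings_cover_negative_subpartitions (a b c : ℤ)
    (ha : 0 ≤ a) (hb : 0 ≤ b) (hc : 0 ≤ c)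
    (hab : b - 1 ≤ a) (hac : c - 1 ≤ a) (hbc : c - 1 ≤ b) :
    (∀ x y z : ℤ, IsSubpartition a b c x y z →
      min (b + c - x) (ceilHalf (y - a)) ≤ z →
        ∃! p : ℤ × ℤ, IsPseudohead a b c p.1 p.2 ∧ (x, y, z) ∈ Sstring a b c p.1 p.2) ∧
    (∀ i j x y z : ℤ, IsPseudohead a b c i j → (x, y, z) ∈ Sstring a b c i j →
      IsSubpartition a b c x y z ∧ min (b + c - x) (ceilHalf (y - a)) ≤ z) := by
  have hS : ∀ i j x y z : ℤ, (x, y, z) ∈ Sstring a b c i j ↔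
      ∃ e p : ℤ, ((e = 0 ∧ i + j ≤ b + c) ∨ (e = i + j - b - c ∧ b + c < i + j)) ∧
        p = a + b + c - (i - j + 2 * e) ∧
        ((i ≤ x ∧ x < p ∧ y = i ∧ z = j) ∨
         (x = p ∧ i ≤ y ∧ y < b + c - (j - e) ∧ z = j) ∨
         (x = p ∧ y = b + c - (j - e) ∧ j ≤ z ∧ z ≤ c)) := by
    intro i j x y z
    simp only [Sstring, Set.mem_setOf_eq, Prod.mk.injEq]
    constructor
    · intro h
      refine ⟨epsP b c i j, _, ?_, rfl, ?_⟩
      · unfold epsP; omega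
      · rcases h with ⟨x', h1, h2, h3, h4, h5⟩ | ⟨x', h1, h2, h3, h4, h5⟩ |
          ⟨x', h1, h2, h3, h4, h5⟩
        · left; omega
        · right; left; omega
        · right; right; omega
    · rintro ⟨e, p, he, hp, h⟩
      have hee : epsP b c i j = e := by unfold epsP; omega
      rw [hee]
      rcases h with h | h | h
      · left; exact ⟨x, by omega⟩
      · right; left; exact ⟨y, by omega⟩
      · right; right; exact ⟨z, by omega⟩
  have hC : ∀ x y z : ℤ, min (b + c - x) (ceilHalf (y - a)) ≤ z ↔
      (b + c - x ≤ z ∨ y - a ≤ 2 * z) := by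
    intro x y z
    have : ceilHalf (y - a) = (y - a + 1) / 2 := by
      unfold ceilHalf
      exact Int.fdiv_eq_ediv_of_nonneg _ (by norm_num)
    rw [this]
    omega
  refine ⟨?_, ?_⟩
  · intro x y z hsub hneg
    rw [hC] at hneg
    unfold IsSubpartition at hsub
    obtain ⟨h1, h2, h3, h4, h5, h6⟩ := hsub
    apply existsUnique_of_exists_of_unique
    · simp only [Prod.exists, hS, IsPseudohead]
      by_cases hyz : y + z ≤ b + c
      · by_cases hx : x < a + b + c - (y - z)
        · refine ⟨y, z, ?_, 0, _, Or.inl ?_, rfl, Or.inl ?_⟩ <;> omega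
        · by_cases hq : y < b + c - z
          · refine ⟨a + b + c + z - x, z, ?_, 0, _, Or.inl ?_, rfl, Or.inr (Or.inl ?_)⟩ <;> omega
          · refine ⟨a + b + c + z - x, z, ?_, 0, _, Or.inl ?_, rfl, Or.inr (Or.inr ?_)⟩ <;> omega
      · by_cases hx : x < a + 3 * b + 3 * c - 3 * y - z
        · refine ⟨y, z, ?_, y + z - b - c, _, Or.inr ?_, rfl, Or.inl ?_⟩ <;> omega
        · by_cases hq : x < a + 2 * b + 2 * c - 2 * y
          · refine ⟨y, a + 3 * b + 3 * c - 3 * y - x, ?_,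
              a + 2 * b + 2 * c - 2 * y - x, _, Or.inr ?_, rfl, Or.inr (Or.inr ?_)⟩ <;> omega
          · refine ⟨a + 2 * b + 2 * c - x - y, b + c - y, ?_, 0, _, Or.inl ?_, rfl,
              Or.inr (Or.inr ?_)⟩ <;> omega
    · rintro ⟨i, j⟩ ⟨k, l⟩ ⟨hp, hs⟩ ⟨hp', hs'⟩
      simp only [hS, IsPseudohead] at hp hs hp' hs'
      obtain ⟨e, p, he, hpp, h⟩ := hs
      obtain ⟨e', p', he', hpp', h'⟩ := hs'
      rw [Prod.mk.injEq]
      rcases he with he | he <;> rcases he' with he' | he' <;>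
        rcases h with h | h | h <;> rcases h' with h' | h' | h' <;>
        (constructor <;> omega)
  · intro i j x y z hp hs
    rw [hS] at hs
    rw [hC]
    unfold IsPseudohead at hp
    unfold IsSubpartition
    obtain ⟨e, p, he, hpp, h⟩ := hs
    rcases he with he | he <;> rcases h with h | h | h <;>
      (refine ⟨?_, ?_⟩ <;> omega)
end

section
/- Let a, b, c be nonnegative integers with a ≥ b−1 and a, b ≥ c−1. Then the set Λ of all subpartitions of λ(a,b,c) is the disjoint union, over all tail index pairs (E,F), of the chains C(T^{EF}); moreover, for each tail index pair (E,F) and each integer m in the area range R^{EF} = [E+F, A−2E−3F+max(ε^{EF}, δ^{EF})], there is exactly one element μ ∈ C(T^{EF}) with area(μ) = m, and C(T^{EF}) contains no element of any other area. -/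
/-- The set `Λ` of subpartitions of `λ(a,b,c) = (a+b+c, b+c, c)`. -/
def Lam (a b c : ℤ) : Set (ℤ × ℤ × ℤ) :=
  {μ | 0 ≤ μ.2.2 ∧ μ.2.2 ≤ μ.2.1 ∧ μ.2.1 ≤ μ.1 ∧ μ.1 ≤ a + b + c ∧
    μ.2.1 ≤ b + c ∧ μ.2.2 ≤ c}

/-- The area of a subpartition: `area(μ) = A − (x+y+z)` with `A = a+2b+3c`. -/
def area (a b c : ℤ) (μ : ℤ × ℤ × ℤ) : ℤ :=
  a + 2 * b + 3 * c - (μ.1 + μ.2.1 + μ.2.2)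

/-- The appendage `A(H_k^ℓ) = {(k,ℓ,z) : 0 ≤ z < min(b+c−k, ⌈(ℓ−a)/2⌉)}`. -/
def appendage (a b c k l : ℤ) : Set (ℤ × ℤ × ℤ) :=
  {μ | ∃ z : ℤ, 0 ≤ z ∧ z < min (b + c - k) (ceilHalf (l - a)) ∧ μ = (k, l, z)}

/-- The chain `C(T^{EF})` of a tail index pair `(E,F)`: the string of the pseudohead
`Ψ(E,F)`, together with the appendage of `Θ(Ψ(E,F))` when `δ > ε`. -/
def chain (a b c E F : ℤ) : Set (ℤ × ℤ × ℤ) :=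
  Sstring a b c (E + F - epsT b c E F) (F + epsT b c E F) ∪
    (if epsP b c (E + F - epsT b c E F) (F + epsT b c E F)
        < delP a b c (E + F - epsT b c E F) (F + epsT b c E F) then
      appendage a b c
        ((E + F - epsT b c E F) + (F + epsT b c E F)
          - delP a b c (E + F - epsT b c E F) (F + epsT b c E F))
        ((E + F - epsT b c E F) + epsP b c (E + F - epsT b c E F) (F + epsT b c E F))
    else ∅)

/-- Membership in a chain, spelled out by linear conditions on coordinates; `e` is the common
value of the two epsilons and `d` of the two deltas. -/
def InCh (a b c E F e d x y z : ℤ) : Prop :=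
  (y = E + F - e ∧ z = F + e ∧ y ≤ x ∧ x < a + b + c - E) ∨
  (x = a + b + c - E ∧ z = F + e ∧ E + F - e ≤ y ∧ y < b + c - F) ∨
  (x = a + b + c - E ∧ y = b + c - F ∧ F + e ≤ z ∧ z ≤ c) ∨
  (x = E + 2 * F - d ∧ y = E + F ∧ 0 ≤ z ∧ z < d - e)

lemma delT_spec (a E F : ℤ) :
    E + F - a ≤ 2 * delT a E F ∧ 2 * delT a E F ≤ E + F - a + 1 := by
  unfold delT ceilHalf
  rw [Int.fdiv_eq_ediv_of_nonneg _ (by norm_num)]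
  omega

lemma epsT_spec (b c E F : ℤ) :
    (epsT b c E F = 0 ∧ E + 2 * F ≤ b + c) ∨
      (epsT b c E F = E + 2 * F - b - c ∧ b + c < E + 2 * F) := by
  unfold epsT
  omega

lemma mem_chain (a b c E F x y z : ℤ) :
    (x, y, z) ∈ chain a b c E F ↔
      InCh a b c E F (epsT b c E F) (delT a E F) x y z := by
  have h1 : epsP b c (E + F - epsT b c E F) (F + epsT b c E F) = epsT b c E F := by
    unfold epsP epsT; omega
  have h2 : delP a b c (E + F - epsT b c E F) (F + epsT b c E F) = delT a E F := by
    unfold delP delT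
    rw [h1]
    congr 1; ring
  have h3 : ceilHalf (E + F - epsT b c E F + epsT b c E F - a) = delT a E F := by
    unfold delT
    congr 1; ring
  have he := epsT_spec b c E F
  unfold chain
  rw [h1, h2]
  unfold appendage
  rw [h3]
  simp only [Set.mem_union, Sstring, h1, Set.mem_ofPred_eq, Prod.mk.injEq, lt_min_iff]
  clear h1 h2 h3
  generalize epsT b c E F = e at *
  generalize delT a E F = d at *
  unfold InCh
  constructor
  · rintro ((⟨w, h⟩ | ⟨w, h⟩ | ⟨w, h⟩) | h)
    · left; omega
    · right; left; omega
    · right; right; left; omega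
    · split_ifs at h with hd
      · simp only [Set.mem_ofPred_eq, Prod.mk.injEq, lt_min_iff] at h
        obtain ⟨w, h⟩ := h
        right; right; right; omega
      · exact h.elim
  · rintro (h | h | h | h)
    · left; left; exact ⟨x, by omega⟩
    · left; right; left; exact ⟨y, by omega⟩
    · left; right; right; exact ⟨z, by omega⟩
    · right
      rw [if_pos (by omega)]
      simp only [Set.mem_ofPred_eq, Prod.mk.injEq, lt_min_iff]
      exact ⟨z, by omega⟩

set_option maxHeartbeats 1000000 in
lemma cover (a b c x y z : ℤ) (ha : 0 ≤ a) (hb : 0 ≤ b) (hc : 0 ≤ c)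
    (hab : b - 1 ≤ a) (hac : c - 1 ≤ a) (hbc : c - 1 ≤ b)
    (h : 0 ≤ z ∧ z ≤ y ∧ y ≤ x ∧ x ≤ a + b + c ∧ y ≤ b + c ∧ z ≤ c) :
    ∃ E F : ℤ, IsTail a b c E F ∧ InCh a b c E F (epsT b c E F) (delT a E F) x y z := by
  by_contra! hn
  have key : ∀ E F, IsTail a b c E F →
    InCh a b c E F (epsT b c E F) (delT a E F) x y z → False := hn
  have t3 := key (a + b + c - x) (b + c - y)
  have t2 := key (a + b + c - x) z
  have t1 := key (y - z + 2 * epsP b c y z) (z - epsP b c y z)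
  have t4 := key (2 * y - x - delT a y 0) (x + delT a y 0 - y)
  clear key hn
  have e1 : epsT b c (y - z + 2 * epsP b c y z) (z - epsP b c y z) = epsP b c y z := by
    unfold epsP epsT; omega
  have e4 : delT a (2 * y - x - delT a y 0) (x + delT a y 0 - y) = delT a y 0 := by
    have := delT_spec a (2 * y - x - delT a y 0) (x + delT a y 0 - y)
    have := delT_spec a y 0
    omega
  rw [e1] at t1
  rw [e4] at t4
  have hd := delT_spec a y 0
  have he : (epsP b c y z = 0 ∧ y + z ≤ b + c) ∨
      (epsP b c y z = y + z - b - c ∧ b + c < y + z) := by unfold epsP; omega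
  have s2 := epsT_spec b c (a + b + c - x) z
  have s3 := epsT_spec b c (a + b + c - x) (b + c - y)
  have s4 := epsT_spec b c (2 * y - x - delT a y 0) (x + delT a y 0 - y)
  unfold IsTail InCh at *
  rw [e1] at t1
  clear e1 e4
  generalize epsP b c y z = e1 at *
  generalize epsT b c (a + b + c - x) z = e2 at *
  generalize epsT b c (a + b + c - x) (b + c - y) = e3 at *
  generalize epsT b c (2 * y - x - delT a y 0) (x + delT a y 0 - y) = e4 at *
  generalize delT a y 0 = d at *
  have u1 : ¬ (x + y - z + 2 * e1 < a + b + c ∧ y - 2 * z + 3 * e1 ≤ a) := by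
    intro q
    refine t1 ?_ (Or.inl (by clear t1 t2 t3 t4; omega))
    clear t1 t2 t3 t4 s2 s3 s4
    rcases he with he | he <;> refine ⟨?_, ?_, ?_, ?_, ?_⟩ <;> omega
  have u2 : ¬ (b + c - x ≤ z ∧ a + b + c - x + z ≤ y ∧ y < b + c - z) := by
    intro q
    have h0 : e2 = 0 := by clear t1 t2 t3 t4 s3 s4; omega
    refine t2 ?_ (Or.inr (Or.inl (by clear t1 t2 t3 t4; omega)))
    clear t1 t2 t3 t4 s3 s4
    refine ⟨?_, ?_, ?_, ?_, ?_⟩ <;> omega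
  have u3 : ¬ (b + c - y + e3 ≤ z) := by
    intro q
    refine t3 ?_ (Or.inr (Or.inr (Or.inl (by clear t1 t2 t3 t4; omega))))
    clear t1 t2 t3 t4 s2 s4
    rcases s3 with s3 | s3 <;> refine ⟨?_, ?_, ?_, ?_, ?_⟩ <;> omega
  have u4 : ¬ (z < d - e4) := by
    intro q
    refine t4 ?_ (Or.inr (Or.inr (Or.inr (by clear t1 t2 t3 t4; omega))))
    clear t1 t2 t3 t4 s2 s3
    rcases s4 with s4 | s4 <;> refine ⟨?_, ?_, ?_, ?_, ?_⟩ <;> omega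
  clear t1 t2 t3 t4
  rcases he with he | he <;> rcases s3 with s3 | s3 <;> rcases s4 with s4 | s4 <;> omega

set_option maxHeartbeats 4000000 in
lemma uniq (a b c E F E' F' e e' d d' x y z : ℤ)
    (he : (e = 0 ∧ E + 2 * F ≤ b + c) ∨ (e = E + 2 * F - b - c ∧ b + c < E + 2 * F))
    (he' : (e' = 0 ∧ E' + 2 * F' ≤ b + c) ∨ (e' = E' + 2 * F' - b - c ∧ b + c < E' + 2 * F'))
    (hd : E + F - a ≤ 2 * d ∧ 2 * d ≤ E + F - a + 1)
    (hd' : E' + F' - a ≤ 2 * d' ∧ 2 * d' ≤ E' + F' - a + 1)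
    (ht : 0 ≤ F ∧ F ≤ c - e ∧ 2 * e ≤ E ∧ E ≤ F + a ∧
      4 * E + 5 * F - 3 * e ≤ a + 3 * b + 3 * c)
    (ht' : 0 ≤ F' ∧ F' ≤ c - e' ∧ 2 * e' ≤ E' ∧ E' ≤ F' + a ∧
      4 * E' + 5 * F' - 3 * e' ≤ a + 3 * b + 3 * c)
    (h : InCh a b c E F e d x y z) (h' : InCh a b c E' F' e' d' x y z) :
    E = E' ∧ F = F' := by
  unfold InCh at h h'
  rcases h with h | h | h | h <;> rcases h' with h' | h' | h' | h' <;>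
    rcases he with he | he <;> rcases he' with he' | he' <;> omega

theorem chain_decomposition (a b c : ℤ) (ha : 0 ≤ a) (hb : 0 ≤ b) (hc : 0 ≤ c)
    (hab : b - 1 ≤ a) (hac : c - 1 ≤ a) (hbc : c - 1 ≤ b) :
    (∀ μ : ℤ × ℤ × ℤ, μ ∈ Lam a b c ↔
      ∃ p : ℤ × ℤ, IsTail a b c p.1 p.2 ∧ μ ∈ chain a b c p.1 p.2) ∧
    (∀ p p' : ℤ × ℤ, IsTail a b c p.1 p.2 → IsTail a b c p'.1 p'.2 → p ≠ p' →
      Disjoint (chain a b c p.1 p.2) (chain a b c p'.1 p'.2)) ∧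
    (∀ E F : ℤ, IsTail a b c E F → ∀ m : ℤ,
      E + F ≤ m →
      m ≤ a + 2 * b + 3 * c - 2 * E - 3 * F + max (epsT b c E F) (delT a E F) →
        ∃! μ : ℤ × ℤ × ℤ, μ ∈ chain a b c E F ∧ area a b c μ = m) ∧
    (∀ E F : ℤ, IsTail a b c E F → ∀ μ ∈ chain a b c E F,
      E + F ≤ area a b c μ ∧
        area a b c μ
          ≤ a + 2 * b + 3 * c - 2 * E - 3 * F + max (epsT b c E F) (delT a E F)) := by
  refine ⟨?_, ?_, ?_, ?_⟩
  · rintro ⟨x, y, z⟩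
    constructor
    · intro h
      obtain ⟨E, F, h1, h2⟩ := cover a b c x y z ha hb hc hab hac hbc h
      exact ⟨(E, F), h1, (mem_chain ..).2 h2⟩
    · rintro ⟨⟨E, F⟩, h1, h2⟩
      have h2 := (mem_chain ..).1 h2
      have he := epsT_spec b c E F
      have hd := delT_spec a E F
      unfold IsTail at h1
      unfold InCh at h2
      simp only [Lam, Set.mem_ofPred_eq] at *
      generalize epsT b c E F = e at *
      generalize delT a E F = d at *
      rcases h2 with h2 | h2 | h2 | h2 <;> rcases he with he | he <;> omega
  · rintro ⟨E, F⟩ ⟨E', F'⟩ h1 h1' hne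
    rw [Set.disjoint_left]
    rintro ⟨x, y, z⟩ h h'
    apply hne
    have := uniq a b c E F E' F' _ _ _ _ x y z (epsT_spec b c E F)
      (epsT_spec b c E' F') (delT_spec a E F) (delT_spec a E' F') h1 h1'
      ((mem_chain ..).1 h) ((mem_chain ..).1 h')
    rw [this.1, this.2]
  · intro E F h1 m hm hm'
    have he := epsT_spec b c E F
    have hd := delT_spec a E F
    unfold IsTail at h1
    have hex : ∃ x y z, InCh a b c E F (epsT b c E F) (delT a E F) x y z ∧
        area a b c (x, y, z) = m := by
      simp only [area]
      unfold InCh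
      generalize epsT b c E F = e at *
      generalize delT a E F = d at *
      by_cases c3 : m ≤ E + F + c - F - e
      · exact ⟨a + b + c - E, b + c - F, c - (m - E - F),
          Or.inr (Or.inr (Or.inl (by omega))), by omega⟩
      by_cases c2 : m ≤ c - e + b + c - F + e - F
      · exact ⟨a + b + c - E, a + 2 * b + 3 * c - m - (a + b + c - E) - (F + e), F + e,
          Or.inr (Or.inl (by omega)), by omega⟩
      by_cases c1 : m ≤ a + 2 * b + 3 * c - 2 * E - 3 * F + e
      · exact ⟨a + 2 * b + 3 * c - m - (E + F - e) - (F + e), E + F - e, F + e,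
          Or.inl (by omega), by omega⟩
      · exact ⟨E + 2 * F - d, E + F, a + 2 * b + 3 * c - m - (E + 2 * F - d) - (E + F),
          Or.inr (Or.inr (Or.inr (by omega))), by omega⟩
    obtain ⟨x, y, z, hx, hm2⟩ := hex
    refine ⟨(x, y, z), ⟨(mem_chain ..).2 hx, hm2⟩, ?_⟩
    rintro ⟨x', y', z'⟩ ⟨hx', hm3⟩
    replace hx' := (mem_chain ..).1 hx'
    simp only [area] at hm2 hm3
    unfold InCh at hx hx'
    clear hm hm'
    generalize epsT b c E F = e at *
    generalize delT a E F = d at *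
    have : x' = x ∧ y' = y ∧ z' = z := by
      rcases hx with hx | hx | hx | hx <;> rcases hx' with hx' | hx' | hx' | hx' <;>
        rcases he with he | he <;> omega
    rw [this.1, this.2.1, this.2.2]
  · rintro E F h1 ⟨x, y, z⟩ h2
    replace h2 := (mem_chain ..).1 h2
    have he := epsT_spec b c E F
    have hd := delT_spec a E F
    unfold IsTail at h1
    unfold InCh at h2
    simp only [area]
    generalize epsT b c E F = e at *
    generalize delT a E F = d at *
    rcases h2 with h2 | h2 | h2 | h2 <;> rcases he with he | he <;> omega
end

section
/- Let a, b, c be nonnegative integers with a ≥ b−1 and a, b ≥ c−1. Then there exists a bijection φ from the set of heads to the set of quasiheads such that the area range of every head equals the area range of its image under φ. -/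
/-- `(s,t')` is a quasihead index pair. -/
def IsQuasihead (a b c s t' : ℤ) : Prop :=
  0 ≤ t' ∧ t' ≤ c ∧ t' ≤ s ∧ s ≤ b + c ∧
    2 * s + 2 * t' ≤ a + b + 2 * c - (c - t') % 2

/-- The set of heads `H = H⁻ ∪ H⁺`: `H⁻` consists of the triples `(i,i,j)` for
pseudohead index pairs `(i,j)` with `δ_{ij} ≤ ε_{ij}`, and
`H⁺ = {(k,ℓ,0) : a < ℓ ≤ k < b+c}`. -/
def Heads (a b c : ℤ) : Set (ℤ × ℤ × ℤ) :=
  {x | (x.2.1 = x.1 ∧ IsPseudohead a b c x.1 x.2.2 ∧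
          delP a b c x.1 x.2.2 ≤ epsP b c x.1 x.2.2) ∨
       (x.2.2 = 0 ∧ a < x.2.1 ∧ x.2.1 ≤ x.1 ∧ x.1 < b + c)}

/-- The set of quasiheads: the triples `(s,s,t')` for quasihead index pairs `(s,t')`. -/
def Quasiheads (a b c : ℤ) : Set (ℤ × ℤ × ℤ) :=
  {x | x.2.1 = x.1 ∧ IsQuasihead a b c x.1 x.2.2}

/-- The area range of a head, recorded as the pair of its endpoints: a positive head
`(k,ℓ,0)` (characterized among heads by `z = 0` and `a < ℓ`) has area range
`[ℓ, A−k−ℓ]`, and a negative head `(i,i,j)` has area range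
`[i+ε_{ij}, A−2i−j+max(0, δ_{ij}−ε_{ij})]`. -/
def headRange (a b c : ℤ) (x : ℤ × ℤ × ℤ) : ℤ × ℤ :=
  if x.2.2 = 0 ∧ a < x.2.1 then
    (x.2.1, a + 2 * b + 3 * c - x.1 - x.2.1)
  else
    (x.1 + epsP b c x.1 x.2.2,
      a + 2 * b + 3 * c - 2 * x.1 - x.2.2
        + max 0 (delP a b c x.1 x.2.2 - epsP b c x.1 x.2.2))

/-- The area range of a quasihead `(s,s,t')`, recorded as the pair of its endpoints
`(s+ε_{st'}, A−2s−t')`. -/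
def quasiheadRange (a b c : ℤ) (x : ℤ × ℤ × ℤ) : ℤ × ℤ :=
  (x.1 + max 0 (x.1 + x.2.2 - b - c), a + 2 * b + 3 * c - 2 * x.1 - x.2.2)

/-- Half of the shift used on the degenerate region `i + j ≥ b + c`. -/
def shiftHalf (a b c N : ℤ) : ℤ := (max 0 (N - a - b - c) + 1) / 2

/-- The map from heads to quasiheads. -/
def headMap (a b c : ℤ) (x : ℤ × ℤ × ℤ) : ℤ × ℤ × ℤ :=
  if x.2.2 = 0 ∧ a < x.2.1 then (x.2.1, x.2.1, x.1 - x.2.1)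
  else if x.1 + x.2.2 < b + c then x
  else (x.1 + shiftHalf a b c (2 * x.1 + x.2.2), x.1 + shiftHalf a b c (2 * x.1 + x.2.2),
    x.2.2 - 2 * shiftHalf a b c (2 * x.1 + x.2.2))

/-- The inverse map. -/
def quasiMap (a b c : ℤ) (x : ℤ × ℤ × ℤ) : ℤ × ℤ × ℤ :=
  if x.1 + x.2.2 < b + c then
    if x.1 ≤ a then x else (x.1 + x.2.2, x.1, 0)
  else (x.1 - shiftHalf a b c (2 * x.1 + x.2.2), x.1 - shiftHalf a b c (2 * x.1 + x.2.2),
    x.2.2 + 2 * shiftHalf a b c (2 * x.1 + x.2.2))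

lemma delP_le_iff (a b c i j : ℤ) :
    delP a b c i j ≤ epsP b c i j ↔ i - epsP b c i j ≤ a := by
  unfold delP ceilHalf
  rw [Int.fdiv_eq_ediv_of_nonneg _ (by norm_num)]
  omega

lemma headMap_mem (a b c : ℤ) (ha : 0 ≤ a) (hb : 0 ≤ b) (hc : 0 ≤ c)
    (hab : b - 1 ≤ a) (hac : c - 1 ≤ a) (hbc : c - 1 ≤ b) (x : ℤ × ℤ × ℤ)
    (hx : x ∈ Heads a b c) :
    headMap a b c x ∈ Quasiheads a b c ∧ quasiMap a b c (headMap a b c x) = x ∧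
      headRange a b c x = quasiheadRange a b c (headMap a b c x) := by
  obtain ⟨i, l, j⟩ := x
  simp only [Heads, Set.mem_ofPred_eq, true_and, delP_le_iff, IsPseudohead] at hx
  by_cases h1 : j = 0 ∧ a < l
  · have e1 : headMap a b c (i, l, j) = (l, l, i - l) := by simp [headMap, h1]
    have hx' : l ≤ i ∧ i < b + c := by
      simp only [epsP] at hx; omega
    rw [e1]
    refine ⟨?_, ?_, ?_⟩
    · simp only [Quasiheads, IsQuasihead, Set.mem_ofPred_eq, true_and]; omega
    · simp only [quasiMap]
      rw [if_pos (by omega), if_neg (by omega)]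
      simp [h1.1]
    · simp only [headRange, quasiheadRange]
      rw [if_pos h1]
      ext <;> simp <;> omega
  · have hx' := hx.resolve_right (by omega)
    obtain ⟨rfl, hp, hd⟩ := hx'
    have hm : max 0 (delP a b c l j - epsP b c l j) = 0 := by
      have := (delP_le_iff a b c l j).2 hd
      omega
    simp only [headRange, if_neg h1, hm]
    simp only [headMap, if_neg h1]
    simp only [epsP] at *
    by_cases h2 : l + j < b + c
    · simp only [if_pos h2]
      refine ⟨?_, ?_, ?_⟩
      · simp only [Quasiheads, IsQuasihead, Set.mem_ofPred_eq, true_and]; omega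
      · simp only [quasiMap, if_pos h2]
        rw [if_pos (by omega)]
      · simp [quasiheadRange]
    · simp only [if_neg h2]
      obtain ⟨h, hh⟩ : ∃ h, h = shiftHalf a b c (2 * l + j) := ⟨_, rfl⟩
      rw [← hh]
      have hN : 2 * (l + h) + (j - 2 * h) = 2 * l + j := by ring
      have hh' := hh
      simp only [shiftHalf] at hh'
      refine ⟨?_, ?_, ?_⟩
      · simp only [Quasiheads, IsQuasihead, Set.mem_ofPred_eq, true_and]; omega
      · simp only [quasiMap, hN, ← hh]
        rw [if_neg (by omega)]
        ext <;> simp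
      · simp only [quasiheadRange]
        ext <;> simp only <;> omega

lemma quasiMap_mem (a b c : ℤ) (ha : 0 ≤ a) (hb : 0 ≤ b) (hc : 0 ≤ c)
    (hab : b - 1 ≤ a) (hac : c - 1 ≤ a) (hbc : c - 1 ≤ b) (x : ℤ × ℤ × ℤ)
    (hx : x ∈ Quasiheads a b c) :
    quasiMap a b c x ∈ Heads a b c ∧ headMap a b c (quasiMap a b c x) = x := by
  obtain ⟨s, s', t⟩ := x
  simp only [Quasiheads, Set.mem_ofPred_eq, true_and, IsQuasihead] at hx
  obtain ⟨rfl, hq⟩ := hx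
  simp only [Heads, Set.mem_ofPred_eq, delP_le_iff, IsPseudohead]
  by_cases h2 : s' + t < b + c
  · by_cases h3 : s' ≤ a
    · simp only [quasiMap, if_pos h2, if_pos h3]
      refine ⟨by simp only [true_and, epsP]; omega, ?_⟩
      simp only [headMap, if_pos h2]
      rw [if_neg (by omega)]
    · simp only [quasiMap, if_pos h2, if_neg h3]
      refine ⟨by simp only [true_and, epsP]; omega, ?_⟩
      simp only [headMap, true_and]
      rw [if_pos (by omega)]
      ext <;> simp
  · simp only [quasiMap, if_neg h2]
    obtain ⟨h, hh⟩ : ∃ h, h = shiftHalf a b c (2 * s' + t) := ⟨_, rfl⟩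
    rw [← hh]
    have hN : 2 * (s' - h) + (t + 2 * h) = 2 * s' + t := by ring
    have hh' := hh
    simp only [shiftHalf] at hh'
    refine ⟨by simp only [true_and, epsP]; omega, ?_⟩
    simp only [headMap, hN, ← hh]
    rw [if_neg (by omega), if_neg (by omega)]
    ext <;> simp

theorem heads_to_quasiheads (a b c : ℤ) (ha : 0 ≤ a) (hb : 0 ≤ b) (hc : 0 ≤ c)
    (hab : b - 1 ≤ a) (hac : c - 1 ≤ a) (hbc : c - 1 ≤ b) :
    ∃ φ : ℤ × ℤ × ℤ → ℤ × ℤ × ℤ,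
      Set.BijOn φ (Heads a b c) (Quasiheads a b c) ∧
      ∀ x ∈ Heads a b c, headRange a b c x = quasiheadRange a b c (φ x) := by
  have H := headMap_mem a b c ha hb hc hab hac hbc
  have Q := quasiMap_mem a b c ha hb hc hab hac hbc
  refine ⟨headMap a b c, ?_, fun x hx => (H x hx).2.2⟩
  exact Set.InvOn.bijOn (f' := quasiMap a b c)
    ⟨fun x hx => (H x hx).2.1, fun x hx => (Q x hx).2⟩
    (fun x hx => (H x hx).1) (fun x hx => (Q x hx).1)
end
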